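/- (Existence of a gap-minimizing potential) Let p > 2. For V ∈ S_p define, for k = 1, 2, λ_k(V) = inf over k-dimensional subspaces E of H₀(Ω) of sup{ a_V(u,u) : u ∈ E, ‖u‖_{L²(Ω)} = 1 }, and let Γ(V) = λ₂(V) − λ₁(V) be the fundamental gap. Then the infimum of Γ over S_p is attained: there exists V* ∈ S_p with Γ(V*) = inf{ Γ(V) : V ∈ S_p }. -/

import Mathlib

open MeasureTheory Set Filter

noncomputable section

/-- The open unit square `Ω = (0,1) × (0,1)` in `ℝ²`. -/
def Omega : Set (ℝ × ℝ) := Ioo (0:ℝ) 1 ×ˢ Ioo (0:ℝ) 1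

/-- Test functions on a set `s`: smooth with compact support contained in `s`. -/
def IsTestOn (s : Set (ℝ × ℝ)) (φ : ℝ × ℝ → ℝ) : Prop :=
  ContDiff ℝ (⊤ : ℕ∞) φ ∧ HasCompactSupport φ ∧ tsupport φ ⊆ s

/-- Classical partial derivative in the `x`-direction. -/
def pdx (φ : ℝ × ℝ → ℝ) (p : ℝ × ℝ) : ℝ := fderiv ℝ φ p (1, 0)

/-- Classical partial derivative in the `y`-direction. -/
def pdy (φ : ℝ × ℝ → ℝ) (p : ℝ × ℝ) : ℝ := fderiv ℝ φ p (0, 1)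

/-- `g` is a weak `x`-partial derivative of `u` on `s`. -/
def HasWeakDerivXOn (s : Set (ℝ × ℝ)) (u g : ℝ × ℝ → ℝ) : Prop :=
  LocallyIntegrableOn u s volume ∧ LocallyIntegrableOn g s volume ∧
  ∀ φ : ℝ × ℝ → ℝ, IsTestOn s φ →
    ∫ p in s, u p * pdx φ p = - ∫ p in s, g p * φ p

/-- `g` is a weak `y`-partial derivative of `u` on `s`. -/
def HasWeakDerivYOn (s : Set (ℝ × ℝ)) (u g : ℝ × ℝ → ℝ) : Prop :=
  LocallyIntegrableOn u s volume ∧ LocallyIntegrableOn g s volume ∧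
  ∀ φ : ℝ × ℝ → ℝ, IsTestOn s φ →
    ∫ p in s, u p * pdy φ p = - ∫ p in s, g p * φ p

/-- Test functions on `Ω`. -/
def IsTest (φ : ℝ × ℝ → ℝ) : Prop := IsTestOn Omega φ

/-- Membership in the weighted Sobolev space `𝓗¹(Ω)`, with weak derivatives `gx, gy`:
`u ∈ L²(Ω)`, `gx = ∂ₓu`, `gy = ∂_y u` weakly, and `y^α₁ gx, x^α₂ gy ∈ L²(Ω)`. -/
structure MemH1 (α₁ α₂ : ℝ) (u gx gy : ℝ × ℝ → ℝ) : Prop where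
  memL2 : MemLp u 2 (volume.restrict Omega)
  weakX : HasWeakDerivXOn Omega u gx
  weakY : HasWeakDerivYOn Omega u gy
  wgx : MemLp (fun p => p.2 ^ α₁ * gx p) 2 (volume.restrict Omega)
  wgy : MemLp (fun p => p.1 ^ α₂ * gy p) 2 (volume.restrict Omega)

/-- The `𝓗¹(Ω)` norm of `u` (with weak derivatives `gx, gy`). -/
def H1Norm (α₁ α₂ : ℝ) (u gx gy : ℝ × ℝ → ℝ) : ℝ :=
  Real.sqrt ((∫ p in Omega, (u p) ^ 2) +
    (∫ p in Omega, (p.2 ^ α₁ * gx p) ^ 2) +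
    (∫ p in Omega, (p.1 ^ α₂ * gy p) ^ 2))

/-- Membership in `𝓗₀¹(Ω)`: member of `𝓗¹(Ω)` approximable in the `𝓗¹` norm by
test functions. -/
def MemH10 (α₁ α₂ : ℝ) (u gx gy : ℝ × ℝ → ℝ) : Prop :=
  MemH1 α₁ α₂ u gx gy ∧
  ∀ ε : ℝ, 0 < ε → ∃ φ : ℝ × ℝ → ℝ, IsTest φ ∧
    H1Norm α₁ α₂ (fun p => u p - φ p) (fun p => gx p - pdx φ p)
      (fun p => gy p - pdy φ p) < ε

/-- Membership in `H₀(Ω) = {u ∈ 𝓗₀¹(Ω) : ∫_Ω V u² < ∞}`. -/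
def MemH0 (α₁ α₂ : ℝ) (V u gx gy : ℝ × ℝ → ℝ) : Prop :=
  MemH10 α₁ α₂ u gx gy ∧
  IntegrableOn (fun p => V p * (u p) ^ 2) Omega volume

/-- The bilinear form `a(u,v)` associated with the sub-elliptic operator with potential `V`. -/
def aForm (α₁ α₂ : ℝ) (V u gx gy v hx hy : ℝ × ℝ → ℝ) : ℝ :=
  ∫ p in Omega, ((p.2 ^ α₁ * gx p) * (p.2 ^ α₁ * hx p) +
    (p.1 ^ α₂ * gy p) * (p.1 ^ α₂ * hy p) + V p * u p * v p)

/-- The bilinear form `a₁(u,v)` (no potential). -/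
def a1Form (α₁ α₂ : ℝ) (u gx gy v hx hy : ℝ × ℝ → ℝ) : ℝ :=
  ∫ p in Omega, ((p.2 ^ α₁ * gx p) * (p.2 ^ α₁ * hx p) +
    (p.1 ^ α₂ * gy p) * (p.1 ^ α₂ * hy p))

/-- Membership in `S_p = {V ∈ L^p(Ω) : V ≥ 0 a.e., ‖V‖_{L^p(Ω)} ≤ M}`. -/
def MemSp (ppow M : ℝ) (V : ℝ × ℝ → ℝ) : Prop :=
  MemLp V (ENNReal.ofReal ppow) (volume.restrict Omega) ∧
  (∀ᵐ p ∂(volume.restrict Omega), 0 ≤ V p) ∧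
  eLpNorm V (ENNReal.ofReal ppow) (volume.restrict Omega) ≤ ENNReal.ofReal M

/-- `u` (with weak derivatives `gx, gy`) is an eigenfunction of the sub-elliptic operator
with potential `V` for the eigenvalue `lam`. -/
def IsEigenfun (α₁ α₂ : ℝ) (V : ℝ × ℝ → ℝ) (lam : ℝ) (u gx gy : ℝ × ℝ → ℝ) : Prop :=
  MemH0 α₁ α₂ V u gx gy ∧
  ∀ v hx hy : ℝ × ℝ → ℝ, MemH0 α₁ α₂ V v hx hy →
    aForm α₁ α₂ V u gx gy v hx hy = lam * ∫ p in Omega, u p * v p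

/-- The first eigenvalue `λ₁(V) = inf { a(u,u) : u ∈ H₀(Ω), ‖u‖_{L²} = 1 }`. -/
def lam1 (α₁ α₂ : ℝ) (V : ℝ × ℝ → ℝ) : ℝ :=
  sInf { r | ∃ u gx gy : ℝ × ℝ → ℝ, MemH0 α₁ α₂ V u gx gy ∧
    (∫ p in Omega, (u p) ^ 2) = 1 ∧ r = aForm α₁ α₂ V u gx gy u gx gy }

/-- `sup { a(u,u) : u ∈ span(φ), ‖u‖_{L²(Ω)} = 1 }` for a finite family `φ` with
weak derivatives `φx, φy`. -/
def rayleighSup (α₁ α₂ : ℝ) (V : ℝ × ℝ → ℝ) {k : ℕ} (φ φx φy : Fin k → ℝ × ℝ → ℝ) : ℝ :=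
  sSup { s | ∃ c : Fin k → ℝ,
    (∫ p in Omega, (∑ i, c i * φ i p) ^ 2) = 1 ∧
    s = aForm α₁ α₂ V (fun p => ∑ i, c i * φ i p) (fun p => ∑ i, c i * φx i p)
      (fun p => ∑ i, c i * φy i p) (fun p => ∑ i, c i * φ i p)
      (fun p => ∑ i, c i * φx i p) (fun p => ∑ i, c i * φy i p) }

/-- The set of values `sup { a(u,u) : u ∈ E, ‖u‖ = 1 }` over `k`-dimensional
subspaces `E` of `H₀(Ω)` (represented by `L²(Ω)`-linearly independent families of
`k` elements of `H₀(Ω)`). -/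
def minmaxSet (α₁ α₂ : ℝ) (V : ℝ × ℝ → ℝ) (k : ℕ) : Set ℝ :=
  { r | ∃ φ φx φy : Fin k → ℝ × ℝ → ℝ,
      (∀ i, MemH0 α₁ α₂ V (φ i) (φx i) (φy i)) ∧
      (∀ c : Fin k → ℝ, (∀ᵐ p ∂(volume.restrict Omega), ∑ i, c i * φ i p = 0) → c = 0) ∧
      r = rayleighSup α₁ α₂ V φ φx φy }

/-- The `k`-th eigenvalue via the min-max principle. -/
def lamk (α₁ α₂ : ℝ) (V : ℝ × ℝ → ℝ) (k : ℕ) : ℝ := sInf (minmaxSet α₁ α₂ V k)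

/-- Membership in `U = (𝓗₀¹(Ω) ∩ L^{2q}(Ω)) \ {0}`. -/
def MemU (α₁ α₂ qe : ℝ) (u gx gy : ℝ × ℝ → ℝ) : Prop :=
  MemH10 α₁ α₂ u gx gy ∧
  MemLp u (ENNReal.ofReal (2 * qe)) (volume.restrict Omega) ∧
  ¬ (∀ᵐ p ∂(volume.restrict Omega), u p = 0)

/-- The functional `J(u) = (a₁(u,u) + M ‖u‖_{L^{2q}(Ω)}²) / ‖u‖_{L²(Ω)}²`. -/
def Jfun (α₁ α₂ M qe : ℝ) (u gx gy : ℝ × ℝ → ℝ) : ℝ :=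
  (a1Form α₁ α₂ u gx gy u gx gy +
    M * (∫ p in Omega, |u p| ^ (2 * qe)) ^ (1 / qe)) / (∫ p in Omega, (u p) ^ 2)

/-- The fundamental gap `Γ(V) = λ₂(V) − λ₁(V)`, with `λ₁, λ₂` given by the min-max
characterization over 1- and 2-dimensional subspaces of `H₀(Ω)`. -/
def gap (α₁ α₂ : ℝ) (V : ℝ × ℝ → ℝ) : ℝ :=
  lamk α₁ α₂ V 2 - lamk α₁ α₂ V 1

section GapAbstract
open scoped Topology

lemma ultra_bdd (U : Ultrafilter ℕ) (a : ℕ → ℝ) (C : ℝ) (h : ∀ n, |a n| ≤ C) :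
    ∃ l, Tendsto a U (𝓝 l) := by
  have hc : IsCompact (Icc (-C) C) := isCompact_Icc
  obtain ⟨l, -, hl⟩ := hc.ultrafilter_le_nhds (U.map a) (by
    rw [Filter.le_principal_iff]
    exact Filter.mem_map.2 (Filter.Eventually.of_forall fun n => abs_le.1 (h n)))
  exact ⟨l, hl⟩

lemma weak_lim {H : Type*} [NormedAddCommGroup H] [InnerProductSpace ℝ H] [CompleteSpace H]
    (U : Ultrafilter ℕ) (w : ℕ → H) (C : ℝ) (hC : ∀ n, ‖w n‖ ≤ C) :
    ∃ w0 : H, ∀ z, Tendsto (fun n => inner ℝ z (w n)) U (𝓝 (inner ℝ z w0)) := by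
  have hb : ∀ z n, |inner ℝ z (w n)| ≤ C * ‖z‖ := fun z n => by
    refine (abs_real_inner_le_norm _ _).trans ?_
    rw [mul_comm]
    exact mul_le_mul_of_nonneg_right (hC n) (norm_nonneg _)
  choose l hl using fun z => ultra_bdd U (fun n => inner ℝ z (w n)) _ (hb z)
  let f : H →ₗ[ℝ] ℝ :=
    { toFun := l
      map_add' := fun x y => by
        refine tendsto_nhds_unique (hl _) ?_
        simpa [inner_add_left] using (hl x).add (hl y)
      map_smul' := fun c x => by
        refine tendsto_nhds_unique (hl _) ?_
        simpa [inner_smul_left] using (hl x).const_mul c }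
  let F : H →L[ℝ] ℝ := f.mkContinuous C (fun z => by
    rw [Real.norm_eq_abs]
    exact le_of_tendsto (hl z).abs (Filter.Eventually.of_forall (hb z)))
  refine ⟨(InnerProductSpace.toDual ℝ H).symm F, fun z => ?_⟩
  have : inner ℝ z ((InnerProductSpace.toDual ℝ H).symm F) = l z := by
    rw [real_inner_comm, InnerProductSpace.toDual_symm_apply]; rfl
  rw [this]; exact hl z

variable {D L : Type*} [NormedAddCommGroup D] [InnerProductSpace ℝ D]
  [NormedAddCommGroup L] [InnerProductSpace ℝ L]

/-- abstract quadratic form -/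
def qf (ι : D →L[ℝ] L) (m : D →L[ℝ] D →L[ℝ] L) (v : L) (w : D) : ℝ :=
  ‖w‖ ^ 2 - ‖ι w‖ ^ 2 + inner ℝ v (m w w)

/-- abstract min-max set -/
def mm (ι : D →L[ℝ] L) (m : D →L[ℝ] D →L[ℝ] L) (v : L) (k : ℕ) : Set ℝ :=
  { r | ∃ w : Fin k → D, (∀ c : Fin k → ℝ, ∑ i, c i • ι (w i) = 0 → c = 0) ∧
    r = sSup { s | ∃ c : Fin k → ℝ, ‖ι (∑ i, c i • w i)‖ = 1 ∧ s = qf ι m v (∑ i, c i • w i) } }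

/-- hypotheses of the abstract theorem -/
structure GapSetup (ι : D →L[ℝ] L) (m : D →L[ℝ] D →L[ℝ] L) (S : Set L) (T : Set D) (M : ℝ) :
    Prop where
  hι : ∀ w, ‖ι w‖ ≤ ‖w‖
  symm : ∀ w w', m w w' = m w' w
  nonneg : ∀ v ∈ S, ∀ w, 0 ≤ inner ℝ v (m w w)
  bound : ∀ v ∈ S, ‖v‖ ≤ M
  conv : Convex ℝ S
  closed : IsClosed S
  ne : S.Nonempty
  dense : Dense T
  bdT : ∀ φ ∈ T, ∃ C, ∀ w, ‖m w φ‖ ≤ C * ‖ι w‖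
  cpt : ∀ ε > 0, ∃ (s : Finset (ℕ × ℕ)) (z : ℕ × ℕ → L), ∀ w,
    ‖ι w‖ ^ 2 ≤ ∑ i ∈ s, (inner ℝ (z i) (ι w)) ^ 2 + ε * ‖w‖ ^ 2
  two : ∃ w : Fin 2 → D, ∀ c : Fin 2 → ℝ, ∑ i, c i • ι (w i) = 0 → c = 0

variable {ι : D →L[ℝ] L} {m : D →L[ℝ] D →L[ℝ] L} {S : Set L} {T : Set D} {M : ℝ}

lemma qf_smul (v : L) (a : ℝ) (x : D) : qf ι m v (a • x) = a ^ 2 * qf ι m v x := by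
  simp only [qf, map_smul, norm_smul, _root_.smul_apply, inner_smul_right, mul_pow,
    Real.norm_eq_abs, sq_abs]
  ring

lemma qf_nonneg (h : GapSetup ι m S T M) {v : L} (hv : v ∈ S) (x : D) : 0 ≤ qf ι m v x := by
  have h1 := h.nonneg v hv x
  have h2 : ‖ι x‖ ^ 2 ≤ ‖x‖ ^ 2 := pow_le_pow_left₀ (norm_nonneg _) (h.hι x) 2
  simp only [qf]; linarith

lemma qf_add_le (h : GapSetup ι m S T M) {v : L} (hv : v ∈ S) (x y : D) :
    qf ι m v (x + y) ≤ 2 * qf ι m v x + 2 * qf ι m v y := by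
  have h1 := qf_nonneg h hv (x - y)
  have e : qf ι m v (x + y) + qf ι m v (x - y) = 2 * qf ι m v x + 2 * qf ι m v y := by
    simp only [qf, map_add, map_sub, _root_.add_apply, _root_.sub_apply,
      inner_add_right, inner_sub_right, norm_add_sq_real, norm_sub_sq_real]
    ring
  linarith

lemma qf_le (h : GapSetup ι m S T M) {v : L} (hv : v ∈ S) (x : D) :
    qf ι m v x ≤ (1 + M * ‖m‖) * ‖x‖ ^ 2 := by
  have h1 : inner ℝ v (m x x) ≤ M * (‖m‖ * ‖x‖ * ‖x‖) :=
    (real_inner_le_norm _ _).trans (mul_le_mul (h.bound v hv) (m.le_opNorm₂ x x) (norm_nonneg _)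
      ((norm_nonneg _).trans (h.bound v hv)))
  simp only [qf]
  nlinarith [sq_nonneg ‖ι x‖]

lemma mm_nonneg (h : GapSetup ι m S T M) {v : L} (hv : v ∈ S) (k : ℕ) :
    ∀ r ∈ mm ι m v k, 0 ≤ r := by
  rintro r ⟨w, -, rfl⟩
  apply Real.sSup_nonneg
  rintro s ⟨c, -, rfl⟩
  exact qf_nonneg h hv _

lemma mm_bddBelow (h : GapSetup ι m S T M) {v : L} (hv : v ∈ S) (k : ℕ) :
    BddBelow (mm ι m v k) := ⟨0, fun r hr => mm_nonneg h hv k r hr⟩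

/-- value in dimension one -/
lemma mm_one (v : L) (r : ℝ) : r ∈ mm ι m v 1 ↔ ∃ w : D, ι w ≠ 0 ∧ r = qf ι m v w / ‖ι w‖ ^ 2 := by
  have key : ∀ w : D, ι w ≠ 0 → sSup { s | ∃ c : Fin 1 → ℝ, ‖ι (∑ i, c i • w)‖ = 1 ∧
      s = qf ι m v (∑ i, c i • w) } = qf ι m v w / ‖ι w‖ ^ 2 := by
    intro w hw
    have hn : ‖ι w‖ ≠ 0 := norm_ne_zero_iff.2 hw
    have : { s | ∃ c : Fin 1 → ℝ, ‖ι (∑ i, c i • w)‖ = 1 ∧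
      s = qf ι m v (∑ i, c i • w) } = {qf ι m v w / ‖ι w‖ ^ 2} := by
      ext s
      simp only [mem_ofPred_eq, Fin.sum_univ_one, mem_singleton_iff, qf_smul, map_smul, norm_smul]
      constructor
      · rintro ⟨c, h1, rfl⟩
        have : (c 0) ^ 2 * ‖ι w‖ ^ 2 = 1 := by
          rw [← sq_abs, ← mul_pow, ← Real.norm_eq_abs, h1, one_pow]
        field_simp
        linear_combination qf ι m v w * this
      · rintro rfl
        refine ⟨fun _ => ‖ι w‖⁻¹, ?_, ?_⟩
        · simp [hn]
        · field_simp
    rw [this, csSup_singleton]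
  constructor
  · rintro ⟨w, hw, rfl⟩
    have hne : ι (w 0) ≠ 0 := by
      intro h0
      have := hw (fun _ => 1) (by simp [h0])
      exact one_ne_zero (congrFun this 0)
    refine ⟨w 0, hne, ?_⟩
    rw [← key _ hne]
    simp
  · rintro ⟨w, hw, rfl⟩
    refine ⟨fun _ => w, ?_, (key w hw).symm⟩
    intro c hc
    ext i
    fin_cases i
    simpa [hw] using hc

/-- Gram-Schmidt -/
lemma gs (w : Fin 2 → D) (hw : ∀ c : Fin 2 → ℝ, ∑ i, c i • ι (w i) = 0 → c = 0) :
    ∃ e f : D, ‖ι e‖ = 1 ∧ ‖ι f‖ = 1 ∧ inner ℝ (ι e) (ι f) = 0 ∧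
      (∀ a b : ℝ, ∃ c : Fin 2 → ℝ, a • e + b • f = ∑ i, c i • w i) ∧
      (∀ c : Fin 2 → ℝ, ∃ a b : ℝ, ∑ i, c i • w i = a • e + b • f) := by
  have h0 : ι (w 0) ≠ 0 := by
    intro h0
    have := hw ![1, 0] (by simp [h0])
    exact one_ne_zero (congrFun this 0)
  set n0 := ‖ι (w 0)‖ with hn0
  have hn0' : n0 ≠ 0 := norm_ne_zero_iff.2 h0
  obtain ⟨e, he⟩ : ∃ e, e = n0⁻¹ • w 0 := ⟨_, rfl⟩
  have hee : ‖ι e‖ = 1 := by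
    rw [he, map_smul, norm_smul, norm_inv, norm_norm, ← hn0, inv_mul_cancel₀ hn0']
  set t := inner ℝ (ι e) (ι (w 1)) with ht
  obtain ⟨g, hg⟩ : ∃ g, g = w 1 - t • e := ⟨_, rfl⟩
  have hgne : ι g ≠ 0 := by
    intro h1
    have := hw ![-(t * n0⁻¹), 1] (by
      simp only [Fin.sum_univ_two, Matrix.cons_val_zero, Matrix.cons_val_one]
      rw [← h1, hg, he]
      simp only [map_sub, map_smul, smul_smul]
      module)
    exact one_ne_zero (congrFun this 1)
  set n1 := ‖ι g‖ with hn1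
  have hn1' : n1 ≠ 0 := norm_ne_zero_iff.2 hgne
  have w0e : w 0 = n0 • e := by rw [he, smul_smul, mul_inv_cancel₀ hn0', one_smul]
  refine ⟨e, n1⁻¹ • g, hee, ?_, ?_, ?_, ?_⟩
  · rw [map_smul, norm_smul, norm_inv, norm_norm, ← hn1, inv_mul_cancel₀ hn1']
  · rw [map_smul, inner_smul_right, hg, map_sub, inner_sub_right, map_smul, inner_smul_right,
      real_inner_self_eq_norm_sq, hee, ← ht]
    simp
  · intro a b
    refine ⟨![a * n0⁻¹ - b * n1⁻¹ * t * n0⁻¹, b * n1⁻¹], ?_⟩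
    simp only [Fin.sum_univ_two, Matrix.cons_val_zero, Matrix.cons_val_one]
    rw [hg, he]
    module
  · intro c
    refine ⟨c 0 * n0 + c 1 * t, c 1 * n1, ?_⟩
    have h3 : (c 1 * n1) • n1⁻¹ • g = c 1 • g := by
      rw [smul_smul, mul_assoc, mul_inv_cancel₀ hn1', mul_one]
    rw [Fin.sum_univ_two, h3, hg, w0e]
    module

lemma sq_eq_one_iff_of_nonneg' {x : ℝ} (hx : 0 ≤ x) : x ^ 2 = 1 ↔ x = 1 := by
  constructor
  · intro h; nlinarith
  · rintro rfl; norm_num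

lemma norm_comb {e f : L} (he : ‖e‖ = 1) (hf : ‖f‖ = 1) (hef : inner ℝ e f = 0) (a b : ℝ) :
    ‖a • e + b • f‖ ^ 2 = a ^ 2 + b ^ 2 := by
  rw [norm_add_sq_real, inner_smul_left, inner_smul_right, hef, norm_smul, norm_smul, he, hf]
  simp

lemma qf_comb_le (h : GapSetup ι m S T M) {v : L} (hv : v ∈ S) {e f : D} (he : ‖ι e‖ = 1)
    (hf : ‖ι f‖ = 1) (hef : inner ℝ (ι e) (ι f) = 0) (a b : ℝ)
    (hab : ‖ι (a • e + b • f)‖ = 1) :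
    qf ι m v (a • e + b • f) ≤ 2 * qf ι m v e + 2 * qf ι m v f := by
  have h1 := norm_comb he hf hef a b
  rw [← map_smul, ← map_smul, ← map_add, hab] at h1
  have h2 := qf_add_le h hv (a • e) (b • f)
  rw [qf_smul, qf_smul] at h2
  nlinarith [qf_nonneg h hv e, qf_nonneg h hv f, sq_nonneg a, sq_nonneg b]

lemma vals_bdd (h : GapSetup ι m S T M) {v : L} (hv : v ∈ S) (w : Fin 2 → D)
    {e f : D} (he : ‖ι e‖ = 1)
    (hf : ‖ι f‖ = 1) (hef : inner ℝ (ι e) (ι f) = 0)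
    (hwe : ∀ c : Fin 2 → ℝ, ∃ a b : ℝ, ∑ i, c i • w i = a • e + b • f) :
    ∀ s ∈ { s | ∃ c : Fin 2 → ℝ, ‖ι (∑ i, c i • w i)‖ = 1 ∧ s = qf ι m v (∑ i, c i • w i) },
      s ≤ 2 * qf ι m v e + 2 * qf ι m v f := by
  rintro s ⟨c, h1, rfl⟩
  obtain ⟨a, b, hab⟩ := hwe c
  rw [hab] at h1 ⊢
  exact qf_comb_le h hv he hf hef a b h1

lemma mm_two_out (h : GapSetup ι m S T M) {v : L} (hv : v ∈ S) {r : ℝ} (hr : r ∈ mm ι m v 2) :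
    ∃ e f : D, ‖ι e‖ = 1 ∧ ‖ι f‖ = 1 ∧ inner ℝ (ι e) (ι f) = 0 ∧
      ∀ a b : ℝ, a ^ 2 + b ^ 2 = 1 → qf ι m v (a • e + b • f) ≤ r := by
  obtain ⟨w, hw, rfl⟩ := hr
  obtain ⟨e, f, he, hf, hef, h1, h2⟩ := gs w hw
  refine ⟨e, f, he, hf, hef, fun a b hab => ?_⟩
  apply le_csSup ⟨_, vals_bdd h hv w he hf hef h2⟩
  obtain ⟨c, hc⟩ := h1 a b
  refine ⟨c, ?_, by rw [hc]⟩
  rw [← hc]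
  have h3 := norm_comb he hf hef a b
  rw [← map_smul, ← map_smul, ← map_add, hab] at h3
  exact (sq_eq_one_iff_of_nonneg' (norm_nonneg _)).1 h3

lemma mm_two_in (h : GapSetup ι m S T M) {v : L} (hv : v ∈ S) {r : ℝ} 
    {e f : D} (he : ‖ι e‖ = 1) (hf : ‖ι f‖ = 1) (hef : inner ℝ (ι e) (ι f) = 0)
    (hr : ∀ a b : ℝ, a ^ 2 + b ^ 2 = 1 → qf ι m v (a • e + b • f) ≤ r) :
    sInf (mm ι m v 2) ≤ r := by
  refine (csInf_le (mm_bddBelow h hv 2) ⟨![e, f], ?_, rfl⟩).trans ?_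
  · intro c hc
    have h3 := norm_comb he hf hef (c 0) (c 1)
    simp only [Fin.sum_univ_two, Matrix.cons_val_zero, Matrix.cons_val_one] at hc
    rw [hc, norm_zero] at h3
    have h4 : c 0 = 0 := by nlinarith [sq_nonneg (c 0), sq_nonneg (c 1)]
    have h5 : c 1 = 0 := by nlinarith [sq_nonneg (c 0), sq_nonneg (c 1)]
    ext i; fin_cases i <;> simp [h4, h5]
  · apply csSup_le
    · exact ⟨_, ![1, 0], by simp [he], rfl⟩
    · rintro s ⟨c, h1, rfl⟩
      simp only [Fin.sum_univ_two, Matrix.cons_val_zero, Matrix.cons_val_one] at h1 ⊢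
      apply hr
      have h3 := norm_comb he hf hef (c 0) (c 1)
      rw [← map_smul, ← map_smul, ← map_add, h1] at h3
      linarith

lemma strong_conv (h : GapSetup ι m S T M) (U : Ultrafilter ℕ) {w : ℕ → D} {w0 : D} {C : ℝ}
    (hC : ∀ n, ‖w n‖ ≤ C) (hw : ∀ f : D →L[ℝ] ℝ, Tendsto (fun n => f (w n)) U (𝓝 (f w0))) :
    Tendsto (fun n => ‖ι (w n - w0)‖) U (𝓝 0) := by
  have hC0 : 0 ≤ C := (norm_nonneg _).trans (hC 0)
  rw [Metric.tendsto_nhds]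
  intro ε hε
  set K := (C + ‖w0‖) ^ 2 + 1 with hK
  have hKpos : 0 < K := by positivity
  obtain ⟨N, z, hz⟩ := h.cpt (ε ^ 2 / (2 * K)) (by positivity)
  have hs : Tendsto (fun n => ∑ i ∈ N, (inner ℝ (z i) (ι (w n - w0))) ^ 2) U (𝓝 0) := by
    have : (0 : ℝ) = ∑ i ∈ N, 0 := by simp
    rw [this]
    refine tendsto_finsetSum _ fun i _ => ?_
    have h1 := hw ((innerSL ℝ (z i)).comp ι)
    have h2 := (h1.sub_const (((innerSL ℝ (z i)).comp ι) w0)).pow 2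
    simpa [map_sub, inner_sub_right] using h2
  have := (hs.eventually (gt_mem_nhds (show (0:ℝ) < ε ^ 2 / 2 by positivity)))
  filter_upwards [this] with n hn
  rw [dist_zero_right, norm_norm]
  have h1 := hz (w n - w0)
  have h2 : ‖w n - w0‖ ^ 2 ≤ K := by
    have := (norm_sub_le (w n) w0).trans (add_le_add_left (hC n) _)
    have := pow_le_pow_left₀ (norm_nonneg _) this 2
    linarith
  have h3 : ε ^ 2 / (2 * K) * ‖w n - w0‖ ^ 2 ≤ ε ^ 2 / 2 := by
    calc _ ≤ ε ^ 2 / (2 * K) * K := by gcongr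
      _ = _ := by field_simp
  exact lt_of_pow_lt_pow_left₀ 2 hε.le (by linarith)

lemma qf_lsc (h : GapSetup ι m S T M) (U : Ultrafilter ℕ) {w : ℕ → D} {w0 : D} {C : ℝ}
    (hC : ∀ n, ‖w n‖ ≤ C) (hw : ∀ f : D →L[ℝ] ℝ, Tendsto (fun n => f (w n)) U (𝓝 (f w0)))
    {v : ℕ → L} {v0 : L} (hv : ∀ n, v n ∈ S)
    (hvv : ∀ z, Tendsto (fun n => inner ℝ z (v n)) U (𝓝 (inner ℝ z v0)))
    {r : ℕ → ℝ} {r0 : ℝ} (hr : Tendsto r U (𝓝 r0)) (hq : ∀ n, qf ι m (v n) (w n) ≤ r n) :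
    qf ι m v0 w0 ≤ r0 := by
  have hs := strong_conv h U hC hw
  have hs2 : Tendsto (fun n => ‖ι (w n)‖) U (𝓝 ‖ι w0‖) := by
    refine Tendsto.norm (tendsto_iff_norm_sub_tendsto_zero.2 ?_)
    simpa only [map_sub] using hs
  have key : ∀ φ ∈ T, ‖w0‖ ^ 2 - ‖ι w0‖ ^ 2 + 2 * inner ℝ v0 (m w0 φ) - inner ℝ v0 (m φ φ) ≤ r0 := by
    intro φ hφ
    obtain ⟨K, hK⟩ := h.bdT φ hφ
    have h1 : Tendsto (fun n => inner ℝ (v n) (m (w n) φ)) U (𝓝 (inner ℝ v0 (m w0 φ))) := by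
      have a1 : Tendsto (fun n => inner ℝ (v n) (m (w n - w0) φ)) U (𝓝 0) := by
        refine squeeze_zero_norm (a := fun n => M * (|K| * ‖ι (w n - w0)‖)) (fun n => ?_) ?_
        · refine (norm_inner_le_norm _ _).trans ?_
          refine mul_le_mul (h.bound _ (hv n)) ((hK _).trans ?_) (norm_nonneg _)
            ((norm_nonneg _).trans (h.bound _ (hv n)))
          exact mul_le_mul_of_nonneg_right (le_abs_self _) (norm_nonneg _)
        · simpa using (hs.const_mul |K|).const_mul M
      have a2 := hvv (m w0 φ)
      have := a1.add a2
      rw [zero_add, real_inner_comm] at this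
      refine this.congr fun n => ?_
      rw [real_inner_comm (v n) (m w0 φ), ← inner_add_right]
      simp
    have h2 := hvv (m φ φ)
    have h3 := hw (innerSL ℝ w0)
    simp only [innerSL_apply_apply, real_inner_self_eq_norm_sq] at h3
    have h4 := (((h3.const_mul 2).sub_const (‖w0‖ ^ 2)).sub (hs2.pow 2)).add
      ((h1.const_mul 2).sub h2)
    have h5 := le_of_tendsto_of_tendsto h4 hr (Filter.Eventually.of_forall fun n => ?_)
    · rw [real_inner_comm v0 (m φ φ)] at h5; linarith
    · refine le_trans ?_ (hq n)
      have b1 := h.nonneg (v n) (hv n) (w n - φ)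
      have b2 : 0 ≤ ‖w0 - w n‖ ^ 2 := sq_nonneg _
      rw [norm_sub_sq_real] at b2
      simp only [map_sub, _root_.sub_apply, inner_sub_right] at b1
      rw [h.symm φ (w n)] at b1
      simp only [qf]
      rw [real_inner_comm (v n) (m φ φ)]
      linarith
  have hcl : IsClosed {φ : D | ‖w0‖ ^ 2 - ‖ι w0‖ ^ 2 + 2 * inner ℝ v0 (m w0 φ)
      - inner ℝ v0 (m φ φ) ≤ r0} := by
    refine isClosed_le ?_ continuous_const
    have c1 : Continuous fun φ => m w0 φ := (m w0).continuous
    have c2 : Continuous fun φ => m φ φ := m.continuous.clm_apply continuous_id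
    fun_prop
  have := hcl.closure_subset_iff.2 key (h.dense w0)
  simp only [mem_ofPred_eq] at this
  simp only [qf]; linarith

theorem abstract_gap [CompleteSpace D] [CompleteSpace L] (h : GapSetup ι m S T M) :
    ∃ v ∈ S, ∀ v' ∈ S, sInf (mm ι m v 2) - sInf (mm ι m v 1) ≤
      sInf (mm ι m v' 2) - sInf (mm ι m v' 1) := by
  obtain ⟨w₂, hw₂⟩ := h.two
  obtain ⟨e₂, f₂, he₂, hf₂, hef₂, -, -⟩ := gs w₂ hw₂
  have hM : ∀ v ∈ S, 0 ≤ 1 + M * ‖m‖ := fun v hv => by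
    have := (norm_nonneg _).trans (h.bound v hv); positivity
  set B := 2 * ((1 + M * ‖m‖) * ‖e₂‖ ^ 2) + 2 * ((1 + M * ‖m‖) * ‖f₂‖ ^ 2) with hB
  have hl2 : ∀ v ∈ S, sInf (mm ι m v 2) ≤ B := fun v hv => by
    refine mm_two_in h hv he₂ hf₂ hef₂ fun a b hab => ?_
    have h3 := norm_comb he₂ hf₂ hef₂ a b
    rw [← map_smul, ← map_smul, ← map_add, hab] at h3
    have := qf_comb_le h hv he₂ hf₂ hef₂ a b
      ((sq_eq_one_iff_of_nonneg' (norm_nonneg _)).1 h3)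
    linarith [qf_le h hv e₂, qf_le h hv f₂]
  have hne1 : ∀ v, (mm ι m v 1).Nonempty := fun v =>
    ⟨_, (mm_one v _).2 ⟨e₂, by intro h0; simp [h0] at he₂, rfl⟩⟩
  have hne2 : ∀ v, (mm ι m v 2).Nonempty := fun v => ⟨_, w₂, hw₂, rfl⟩
  have hl1 : ∀ v ∈ S, sInf (mm ι m v 1) ≤ (1 + M * ‖m‖) * ‖e₂‖ ^ 2 := fun v hv => by
    refine (csInf_le (mm_bddBelow h hv 1) ((mm_one v _).2 ⟨e₂, by intro h0; simp [h0] at he₂, rfl⟩)).trans ?_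
    rw [he₂]; simpa using qf_le h hv e₂
  have h10 : ∀ v ∈ S, 0 ≤ sInf (mm ι m v 1) := fun v hv => Real.sInf_nonneg (mm_nonneg h hv 1)
  have h20 : ∀ v ∈ S, 0 ≤ sInf (mm ι m v 2) := fun v hv => Real.sInf_nonneg (mm_nonneg h hv 2)
  set G := (fun v => sInf (mm ι m v 2) - sInf (mm ι m v 1)) '' S with hG
  have hGb : BddBelow G := ⟨-((1 + M * ‖m‖) * ‖e₂‖ ^ 2), by
    rintro _ ⟨v, hv, rfl⟩
    show _ ≤ sInf (mm ι m v 2) - sInf (mm ι m v 1)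
    linarith [hl1 v hv, h20 v hv]⟩
  obtain ⟨g, -, hg, hgm⟩ := exists_seq_tendsto_sInf (h.ne.image _ : G.Nonempty) hGb
  choose v hv hvg using hgm
  let U : Ultrafilter ℕ := Filter.hyperfilter ℕ
  have hU : (U : Filter ℕ) ≤ atTop := Nat.hyperfilter_le_atTop
  obtain ⟨v0, hv0⟩ := weak_lim U v M fun n => h.bound _ (hv n)
  have hv0S : v0 ∈ S := by
    by_contra hns
    obtain ⟨f, u, hu1, hu2⟩ := geometric_hahn_banach_point_closed h.conv h.closed hns
    have h1 := hv0 ((InnerProductSpace.toDual ℝ L).symm f)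
    simp only [InnerProductSpace.toDual_symm_apply] at h1
    have := ge_of_tendsto h1 (Filter.Eventually.of_forall fun n => (hu2 _ (hv n)).le)
    linarith
  obtain ⟨l1, ht1⟩ := ultra_bdd U (fun n => sInf (mm ι m (v n) 1)) ((1 + M * ‖m‖) * ‖e₂‖ ^ 2)
    fun n => by rw [abs_of_nonneg (h10 _ (hv n))]; exact hl1 _ (hv n)
  obtain ⟨l2, ht2⟩ := ultra_bdd U (fun n => sInf (mm ι m (v n) 2)) B
    fun n => by rw [abs_of_nonneg (h20 _ (hv n))]; exact hl2 _ (hv n)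
  have hlim : l2 - l1 = sInf G := by
    refine tendsto_nhds_unique (ht2.sub ht1) ((hg.mono_left hU).congr fun n => (hvg n).symm)
  refine ⟨v0, hv0S, fun v' hv' => ?_⟩
  have hle : l2 - l1 ≤ sInf (mm ι m v' 2) - sInf (mm ι m v' 1) := by
    rw [hlim]; exact csInf_le hGb ⟨v', hv', rfl⟩
  have hA : l1 ≤ sInf (mm ι m v0 1) := by
    refine le_csInf (hne1 v0) fun r hr => ?_
    obtain ⟨w, hw, rfl⟩ := (mm_one _ _).1 hr
    have h2 : Tendsto (fun n => qf ι m (v n) w / ‖ι w‖ ^ 2) U (𝓝 (qf ι m v0 w / ‖ι w‖ ^ 2)) := by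
      simp only [qf]
      refine Tendsto.div_const (Tendsto.const_add _ ?_) _
      simpa only [real_inner_comm] using hv0 (m w w)
    exact le_of_tendsto_of_tendsto ht1 h2 (Filter.Eventually.of_forall fun n =>
      csInf_le (mm_bddBelow h (hv n) 1) ((mm_one _ _).2 ⟨w, hw, rfl⟩))
  have hBB : sInf (mm ι m v0 2) ≤ l2 := by
    have hex : ∀ n : ℕ, ∃ r ∈ mm ι m (v n) 2, r < sInf (mm ι m (v n) 2) + 1 / ((n : ℝ) + 1) := fun n =>
      Real.lt_sInf_add_pos (hne2 _) (by positivity)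
    choose r hr hrl using hex
    have hrt : Tendsto r U (𝓝 l2) := by
      have h1 : Tendsto (fun n => sInf (mm ι m (v n) 2) + 1 / ((n : ℝ) + 1)) U (𝓝 (l2 + 0)) :=
        ht2.add (tendsto_one_div_add_atTop_nhds_zero_nat.mono_left hU)
      rw [add_zero] at h1
      exact tendsto_of_tendsto_of_tendsto_of_le_of_le ht2 h1
        (fun n => csInf_le (mm_bddBelow h (hv n) 2) (hr n)) (fun n => (hrl n).le)
    choose e f he hf hef hq using fun n => mm_two_out h (hv n) (hr n)
    have hrB : ∀ n, r n ≤ B + 1 := fun n => by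
      have : 1 / ((n : ℝ) + 1) ≤ 1 := by
        rw [div_le_one (by positivity)]; linarith [Nat.cast_nonneg (α := ℝ) n]
      linarith [hrl n, hl2 _ (hv n)]
    have nb : ∀ n x, ‖ι x‖ = 1 → qf ι m (v n) x ≤ r n → ‖x‖ ≤ Real.sqrt (B + 2) := by
      intro n x hx hqx
      apply Real.le_sqrt_of_sq_le
      have := h.nonneg _ (hv n) x
      simp only [qf, hx] at hqx
      linarith [hrB n]
    have heb : ∀ n, ‖e n‖ ≤ Real.sqrt (B + 2) := fun n => nb n _ (he n) (by
      simpa using hq n 1 0 (by norm_num))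
    have hfb : ∀ n, ‖f n‖ ≤ Real.sqrt (B + 2) := fun n => nb n _ (hf n) (by
      simpa using hq n 0 1 (by norm_num))
    obtain ⟨e0, he0⟩ := weak_lim U e _ heb
    obtain ⟨f0, hf0⟩ := weak_lim U f _ hfb
    have he0' : ∀ F : D →L[ℝ] ℝ, Tendsto (fun n => F (e n)) U (𝓝 (F e0)) := fun F => by
      simpa only [InnerProductSpace.toDual_symm_apply] using he0 ((InnerProductSpace.toDual ℝ D).symm F)
    have hf0' : ∀ F : D →L[ℝ] ℝ, Tendsto (fun n => F (f n)) U (𝓝 (F f0)) := fun F => by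
      simpa only [InnerProductSpace.toDual_symm_apply] using hf0 ((InnerProductSpace.toDual ℝ D).symm F)
    have hes : Tendsto (fun n => ι (e n)) U (𝓝 (ι e0)) := by
      refine tendsto_iff_norm_sub_tendsto_zero.2 ?_
      simpa only [map_sub] using strong_conv h U heb he0'
    have hfs : Tendsto (fun n => ι (f n)) U (𝓝 (ι f0)) := by
      refine tendsto_iff_norm_sub_tendsto_zero.2 ?_
      simpa only [map_sub] using strong_conv h U hfb hf0'
    refine mm_two_in h hv0S (e := e0) (f := f0) ?_ ?_ ?_ fun a b hab => ?_
    · exact tendsto_nhds_unique hes.norm (by simp only [he]; exact tendsto_const_nhds)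
    · exact tendsto_nhds_unique hfs.norm (by simp only [hf]; exact tendsto_const_nhds)
    · exact tendsto_nhds_unique (hes.inner hfs) (by simp only [hef]; exact tendsto_const_nhds)
    · refine qf_lsc h U (w := fun n => a • e n + b • f n)
        (C := |a| * Real.sqrt (B + 2) + |b| * Real.sqrt (B + 2)) (fun n => ?_) (fun F => ?_) hv hv0 hrt
        (fun n => hq n a b hab)
      · refine (norm_add_le _ _).trans ?_
        rw [norm_smul, norm_smul, Real.norm_eq_abs, Real.norm_eq_abs]
        gcongr
        · exact heb n
        · exact hfb n
      · simpa using ((he0' F).const_mul a).add ((hf0' F).const_mul b)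
  linarith

end GapAbstract

set_option linter.unusedSectionVars false

section GapConcrete
open scoped Topology

/-- Lebesgue measure on the unit interval -/
abbrev rho1 : Measure ℝ := volume.restrict (Ioo (0:ℝ) 1)
/-- Lebesgue measure on the square -/
abbrev muO : Measure (ℝ × ℝ) := volume.restrict Omega

instance : IsProbabilityMeasure rho1 := ⟨by simp [rho1]⟩

lemma muO_eq : muO = rho1.prod rho1 := by
  rw [muO, rho1, Measure.prod_restrict, Omega]; rfl

instance : IsProbabilityMeasure muO := by rw [muO_eq]; infer_instance

lemma measO : MeasurableSet Omega := measurableSet_Ioo.prod measurableSet_Ioo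

lemma cont_int {h : ℝ × ℝ → ℝ} (hc : Continuous h) : Integrable h muO := by
  have : IntegrableOn h (Icc (0:ℝ) 1 ×ˢ Icc (0:ℝ) 1) volume :=
    hc.continuousOn.integrableOn_compact (isCompact_Icc.prod isCompact_Icc)
  exact this.mono_set (prod_mono Ioo_subset_Icc_self Ioo_subset_Icc_self)

lemma cont_int1 {h : ℝ → ℝ} (hc : Continuous h) : Integrable h rho1 := by
  have : IntegrableOn h (Icc (0:ℝ) 1) volume := hc.continuousOn.integrableOn_compact isCompact_Icc
  exact this.mono_set Ioo_subset_Icc_self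

lemma cont_memLp {h : ℝ × ℝ → ℝ} (hc : Continuous h) (q : ENNReal) : MemLp h q muO := by
  have hK : IsCompact (Icc (0:ℝ) 1 ×ˢ Icc (0:ℝ) 1) := isCompact_Icc.prod isCompact_Icc
  obtain ⟨C, hC⟩ := hK.exists_bound_of_continuousOn hc.continuousOn
  refine MemLp.of_bound hc.aestronglyMeasurable C ?_
  filter_upwards [ae_restrict_mem measO] with p hp
  exact hC p ⟨Ioo_subset_Icc_self hp.1, Ioo_subset_Icc_self hp.2⟩

lemma cs1 {h : ℝ → ℝ} (hc : Continuous h) {a b : ℝ} (hab : a ≤ b) :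
    (∫ s in a..b, h s) ^ 2 ≤ (b - a) * ∫ s in a..b, h s ^ 2 := by
  have hi : IntervalIntegrable h volume a b := hc.intervalIntegrable _ _
  have hi2 : IntervalIntegrable (fun s => h s ^ 2) volume a b := (hc.pow 2).intervalIntegrable _ _
  rcases hab.eq_or_lt with rfl | hlt
  · simp
  set I := ∫ s in a..b, h s
  set t := I / (b - a) with ht
  have h0 : 0 ≤ ∫ s in a..b, (h s - t) ^ 2 :=
    intervalIntegral.integral_nonneg hab fun _ _ => sq_nonneg _
  have h1 : ∫ s in a..b, (h s - t) ^ 2 = (∫ s in a..b, h s ^ 2) - 2 * t * I + t ^ 2 * (b - a) := by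
    have : ∀ s, (h s - t) ^ 2 = h s ^ 2 - 2 * t * h s + t ^ 2 := fun s => by ring
    simp_rw [this]
    rw [intervalIntegral.integral_add (hi2.sub (hi.const_mul _)) (by simp),
      intervalIntegral.integral_sub hi2 (hi.const_mul _), intervalIntegral.integral_const_mul]
    simp [I]; ring
  rw [h1] at h0
  have hb : 0 < b - a := sub_pos.2 hlt
  have hI : I = t * (b - a) := by rw [ht]; field_simp
  rw [hI] at h0 ⊢
  nlinarith [mul_nonneg hb.le h0]

lemma interval_eq_rho (h : ℝ → ℝ) : ∫ s in (0:ℝ)..1, h s = ∫ s, h s ∂rho1 := by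
  rw [intervalIntegral.integral_of_le zero_le_one, integral_Ioc_eq_integral_Ioo]

/-- basic one-dimensional estimate -/
lemma one_dim {ψ ψ' : ℝ → ℝ} (hd : ∀ s, HasDerivAt ψ (ψ' s) s) (hc : Continuous ψ') {x x' : ℝ}
    (hx : x ∈ Icc (0:ℝ) 1) (hx' : x' ∈ Icc (0:ℝ) 1) :
    (ψ x - ψ x') ^ 2 ≤ |x - x'| * ∫ s in (0:ℝ)..1, ψ' s ^ 2 := by
  wlog hle : x' ≤ x generalizing x x'
  · have := this hx' hx (le_of_not_ge hle)
    rw [abs_sub_comm] at this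
    calc _ = (ψ x' - ψ x) ^ 2 := by ring
      _ ≤ _ := this
  have h1 : ∫ s in x'..x, ψ' s = ψ x - ψ x' :=
    intervalIntegral.integral_eq_sub_of_hasDerivAt (fun s _ => hd s) (hc.intervalIntegrable _ _)
  rw [← h1, abs_of_nonneg (sub_nonneg.2 hle)]
  refine (cs1 hc hle).trans (mul_le_mul_of_nonneg_left ?_ (sub_nonneg.2 hle))
  refine intervalIntegral.integral_mono_interval hx'.1 hle hx.2
    (Filter.Eventually.of_forall fun s => sq_nonneg _) ((hc.pow 2).intervalIntegrable _ _)

/-- energy of the slice in direction x -/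
def slX (φ : ℝ × ℝ → ℝ) (y : ℝ) : ℝ := ∫ s in (0:ℝ)..1, pdx φ (s, y) ^ 2
/-- energy of the slice in direction y -/
def slY (φ : ℝ × ℝ → ℝ) (x : ℝ) : ℝ := ∫ s in (0:ℝ)..1, pdy φ (x, s) ^ 2

section test
variable {φ : ℝ × ℝ → ℝ} (hφ : IsTest φ)
include hφ

lemma test_diff : Differentiable ℝ φ := hφ.1.differentiable (by simp)
lemma test_cont : Continuous φ := hφ.1.continuous
lemma test_contx : Continuous (pdx φ) := by
  have := hφ.1.continuous_fderiv (by simp)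
  exact this.clm_apply continuous_const
lemma test_conty : Continuous (pdy φ) := by
  have := hφ.1.continuous_fderiv (by simp)
  exact this.clm_apply continuous_const

lemma test_dx (x y : ℝ) : HasDerivAt (fun s => φ (s, y)) (pdx φ (x, y)) x := by
  have h1 : HasFDerivAt φ (fderiv ℝ φ (x, y)) (x, y) := (test_diff hφ _).hasFDerivAt
  have h2 : HasDerivAt (fun s : ℝ => (s, y)) ((1:ℝ), (0:ℝ)) x :=
    (hasDerivAt_id x).prodMk (hasDerivAt_const x y)
  exact h1.comp_hasDerivAt x h2

lemma test_dy (x y : ℝ) : HasDerivAt (fun s => φ (x, s)) (pdy φ (x, y)) y := by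
  have h1 : HasFDerivAt φ (fderiv ℝ φ (x, y)) (x, y) := (test_diff hφ _).hasFDerivAt
  have h2 : HasDerivAt (fun s : ℝ => (x, s)) ((0:ℝ), (1:ℝ)) y :=
    (hasDerivAt_const y x).prodMk (hasDerivAt_id y)
  exact h1.comp_hasDerivAt y h2

lemma test_zero {p : ℝ × ℝ} (hp : p ∉ Omega) : φ p = 0 :=
  image_eq_zero_of_notMem_tsupport fun h => hp (hφ.2.2 h)

lemma slX_cont : Continuous (slX φ) := by
  unfold slX
  have := test_contx hφ
  apply intervalIntegral.continuous_parametric_intervalIntegral_of_continuous'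
  fun_prop

lemma slY_cont : Continuous (slY φ) := by
  unfold slY
  have := test_conty hφ
  apply intervalIntegral.continuous_parametric_intervalIntegral_of_continuous'
  fun_prop

lemma test_x {x x' : ℝ} (y : ℝ) (hx : x ∈ Icc (0:ℝ) 1) (hx' : x' ∈ Icc (0:ℝ) 1) :
    (φ (x, y) - φ (x', y)) ^ 2 ≤ |x - x'| * slX φ y :=
  one_dim (ψ := fun s => φ (s, y)) (ψ' := fun s => pdx φ (s, y)) (fun s => test_dx hφ s y)
    ((test_contx hφ).comp (by fun_prop)) hx hx'

lemma test_y {y y' : ℝ} (x : ℝ) (hx : y ∈ Icc (0:ℝ) 1) (hx' : y' ∈ Icc (0:ℝ) 1) :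
    (φ (x, y) - φ (x, y')) ^ 2 ≤ |y - y'| * slY φ x :=
  one_dim (ψ := fun s => φ (x, s)) (ψ' := fun s => pdy φ (x, s)) (fun s => test_dy hφ x s)
    ((test_conty hφ).comp (by fun_prop)) hx hx'

lemma test_x0 {x : ℝ} (y : ℝ) (hx : x ∈ Icc (0:ℝ) 1) : φ (x, y) ^ 2 ≤ x * slX φ y := by
  have := test_x hφ y hx (x' := 0) (by simp)
  rwa [test_zero hφ (p := (0, y)) (by simp [Omega]), sub_zero, sub_zero, abs_of_nonneg hx.1] at this

lemma test_y0 {y : ℝ} (x : ℝ) (hx : y ∈ Icc (0:ℝ) 1) : φ (x, y) ^ 2 ≤ y * slY φ x := by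
  have := test_y hφ x hx (y' := 0) (by simp)
  rwa [test_zero hφ (p := (x, 0)) (by simp [Omega]), sub_zero, sub_zero, abs_of_nonneg hx.1] at this

end test

lemma slX_nonneg (φ : ℝ × ℝ → ℝ) (y : ℝ) : 0 ≤ slX φ y :=
  intervalIntegral.integral_nonneg zero_le_one fun _ _ => sq_nonneg _
lemma slY_nonneg (φ : ℝ × ℝ → ℝ) (y : ℝ) : 0 ≤ slY φ y :=
  intervalIntegral.integral_nonneg zero_le_one fun _ _ => sq_nonneg _

/-- weighted slice energies -/
def Ft (α : ℝ) (φ : ℝ × ℝ → ℝ) (y : ℝ) : ℝ := (y ^ α) ^ 2 * slX φ y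
/-- weighted slice energies -/
def Gt (α : ℝ) (φ : ℝ × ℝ → ℝ) (x : ℝ) : ℝ := (x ^ α) ^ 2 * slY φ x

lemma Ft_nonneg (α : ℝ) (φ : ℝ × ℝ → ℝ) (y : ℝ) : 0 ≤ Ft α φ y :=
  mul_nonneg (sq_nonneg _) (slX_nonneg _ _)
lemma Gt_nonneg (α : ℝ) (φ : ℝ × ℝ → ℝ) (y : ℝ) : 0 ≤ Gt α φ y :=
  mul_nonneg (sq_nonneg _) (slY_nonneg _ _)

lemma wt_ge {α y : ℝ} (hα : α ∈ Ioo (0:ℝ) (1/2)) (hy : y ∈ Ioo (0:ℝ) 1) : y ≤ (y ^ α) ^ 2 := by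
  rw [← Real.rpow_natCast, ← Real.rpow_mul hy.1.le]
  conv_lhs => rw [← Real.rpow_one y]
  apply Real.rpow_le_rpow_of_exponent_ge hy.1 hy.2.le
  push_cast
  linarith [hα.2]

lemma wt_cont {α : ℝ} (hα : α ∈ Ioo (0:ℝ) (1/2)) : Continuous (fun y : ℝ => y ^ α) :=
  Real.continuous_rpow_const hα.1.le

variable {α₁ α₂ : ℝ} (hα₁ : α₁ ∈ Ioo (0:ℝ) (1/2)) (hα₂ : α₂ ∈ Ioo (0:ℝ) (1/2))
include hα₁ hα₂

lemma Ft_int {φ : ℝ × ℝ → ℝ} (hφ : IsTest φ) :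
    ∫ y, Ft α₁ φ y ∂rho1 = ∫ p, (p.2 ^ α₁ * pdx φ p) ^ 2 ∂muO := by
  have hc := wt_cont hα₁
  have hx := test_contx hφ
  have hi : Integrable (fun p : ℝ × ℝ => (p.2 ^ α₁ * pdx φ p) ^ 2) (rho1.prod rho1) := by
    rw [← muO_eq]; apply cont_int; fun_prop
  rw [muO_eq, integral_prod_symm _ hi]
  refine integral_congr_ae (Filter.Eventually.of_forall fun y => ?_)
  simp only [Ft, slX, mul_pow, integral_const_mul, interval_eq_rho]

lemma Gt_int {φ : ℝ × ℝ → ℝ} (hφ : IsTest φ) :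
    ∫ y, Gt α₂ φ y ∂rho1 = ∫ p, (p.1 ^ α₂ * pdy φ p) ^ 2 ∂muO := by
  have hc := wt_cont hα₂
  have hx := test_conty hφ
  have hi : Integrable (fun p : ℝ × ℝ => (p.1 ^ α₂ * pdy φ p) ^ 2) (rho1.prod rho1) := by
    rw [← muO_eq]; apply cont_int; fun_prop
  rw [muO_eq, integral_prod _ hi]
  refine integral_congr_ae (Filter.Eventually.of_forall fun y => ?_)
  simp only [Gt, slY, mul_pow, integral_const_mul, interval_eq_rho]

lemma Ft_cont {φ : ℝ × ℝ → ℝ} (hφ : IsTest φ) : Continuous (Ft α₁ φ) := by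
  have := wt_cont hα₁
  have := slX_cont hφ
  unfold Ft; fun_prop
lemma Gt_cont {φ : ℝ × ℝ → ℝ} (hφ : IsTest φ) : Continuous (Gt α₂ φ) := by
  have := wt_cont hα₂
  have := slY_cont hφ
  unfold Gt; fun_prop

/-- the key pointwise bound -/
lemma pt4 {φ : ℝ × ℝ → ℝ} (hφ : IsTest φ) {p : ℝ × ℝ} (hp : p ∈ Omega) :
    φ p ^ 4 ≤ Gt α₂ φ p.1 * Ft α₁ φ p.2 := by
  obtain ⟨x, y⟩ := p
  have h1 := test_x0 hφ y (Ioo_subset_Icc_self hp.1)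
  have h2 := test_y0 hφ x (Ioo_subset_Icc_self hp.2)
  have hx := wt_ge hα₂ hp.1
  have hy := wt_ge hα₁ hp.2
  have hx0 : (0:ℝ) < x := hp.1.1
  have hy0 : (0:ℝ) < y := hp.2.1
  calc φ (x, y) ^ 4 = φ (x, y) ^ 2 * φ (x, y) ^ 2 := by ring
    _ ≤ (x * slX φ y) * (y * slY φ x) := mul_le_mul h1 h2 (sq_nonneg _)
        (mul_nonneg hx0.le (slX_nonneg _ _))
    _ = (x * slY φ x) * (y * slX φ y) := by ring
    _ ≤ _ := by
      unfold Gt Ft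
      exact mul_le_mul (mul_le_mul_of_nonneg_right hx (slY_nonneg _ _))
        (mul_le_mul_of_nonneg_right hy (slX_nonneg _ _)) (mul_nonneg hy0.le (slX_nonneg _ _))
        (mul_nonneg (sq_nonneg _) (slY_nonneg _ _))

lemma L4_test {φ : ℝ × ℝ → ℝ} (hφ : IsTest φ) :
    ∫ p, φ p ^ 4 ∂muO ≤ (∫ p, (p.1 ^ α₂ * pdy φ p) ^ 2 ∂muO) * ∫ p, (p.2 ^ α₁ * pdx φ p) ^ 2 ∂muO := by
  rw [← Gt_int hα₁ hα₂ hφ, ← Ft_int hα₁ hα₂ hφ, ← integral_prod_mul, ← muO_eq]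
  have := test_cont hφ
  have := Gt_cont hα₁ hα₂ hφ
  have := Ft_cont hα₁ hα₂ hφ
  refine integral_mono_ae (cont_int (by fun_prop)) (cont_int (by fun_prop)) ?_
  filter_upwards [ae_restrict_mem measO] with p hp
  exact pt4 hα₁ hα₂ hφ hp

omit hα₁ hα₂ in
lemma cell_var {X : Type*} [MeasurableSpace X] (ν : Measure X) [IsFiniteMeasure ν] {u A B : X → ℝ}
    (hu : Integrable u ν) (hu2 : Integrable (fun p => u p ^ 2) ν) (hA : Integrable A ν)
    (hB : Integrable B ν) (h : ∀ᵐ q ∂ν, ∀ᵐ p ∂ν, (u p - u q) ^ 2 ≤ A p + B q) :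
    ν.real univ * ∫ p, u p ^ 2 ∂ν ≤ (∫ p, u p ∂ν) ^ 2
      + ν.real univ / 2 * (∫ p, A p ∂ν + ∫ p, B p ∂ν) := by
  have h1 : ∀ᵐ q ∂ν, ∫ p, u p ^ 2 ∂ν - 2 * (∫ p, u p ∂ν) * u q + ν.real univ * u q ^ 2
      ≤ ∫ p, A p ∂ν + ν.real univ * B q := by
    filter_upwards [h] with q hq
    have e1 : ∫ p, (u p - u q) ^ 2 ∂ν
        = ∫ p, u p ^ 2 ∂ν - 2 * (∫ p, u p ∂ν) * u q + ν.real univ * u q ^ 2 := by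
      have : ∀ p, (u p - u q) ^ 2 = u p ^ 2 - (2 * u q) * u p + u q ^ 2 := fun s => by ring
      simp_rw [this]
      have i3 : Integrable (fun p => u p ^ 2 - (2 * u q) * u p) ν := hu2.sub (hu.const_mul _)
      rw [integral_add i3 (integrable_const _),
        integral_sub hu2 (hu.const_mul _), integral_const_mul, integral_const, smul_eq_mul]
      ring
    have e2 : ∫ p, (A p + B q) ∂ν = ∫ p, A p ∂ν + ν.real univ * B q := by
      rw [integral_add hA (integrable_const _), integral_const, smul_eq_mul]
    rw [← e1, ← e2]
    refine integral_mono_ae ?_ (hA.add (integrable_const _)) hq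
    have : (fun p => (u p - u q) ^ 2) = fun p => u p ^ 2 - (2 * u q) * u p + u q ^ 2 := by
      ext s; ring
    rw [this]
    exact (hu2.sub (hu.const_mul _)).add (integrable_const _)
  have i1 : Integrable (fun q => ∫ p, u p ^ 2 ∂ν - 2 * (∫ p, u p ∂ν) * u q) ν :=
    (integrable_const _).sub (hu.const_mul _)
  have i2 : Integrable (fun q => ν.real univ * u q ^ 2) ν := hu2.const_mul _
  have h2 := integral_mono_ae (i1.add i2) ((integrable_const (∫ p, A p ∂ν)).add (hB.const_mul (ν.real univ))) h1
  rw [integral_add' i1 i2, integral_add' (integrable_const _) (hB.const_mul _),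
    integral_sub (integrable_const _) (hu.const_mul _)] at h2
  simp only [integral_const_mul, integral_const, smul_eq_mul] at h2
  nlinarith

/-- interior region -/
def Sd (δ : ℝ) : Set (ℝ × ℝ) := {p | δ ≤ p.1 ∧ δ ≤ p.2}
/-- grid index -/
def gidx (N : ℕ) (p : ℝ × ℝ) : ℕ × ℕ := (⌊(N:ℝ) * p.1⌋₊, ⌊(N:ℝ) * p.2⌋₊)
/-- grid cells -/
def Qc (δ : ℝ) (N : ℕ) (k : ℕ × ℕ) : Set (ℝ × ℝ) := (Sd δ ∩ Omega) ∩ gidx N ⁻¹' {k}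

omit hα₁ hα₂ in
lemma Sd_meas (δ : ℝ) : MeasurableSet (Sd δ) :=
  (measurableSet_le measurable_const measurable_fst).inter
    (measurableSet_le measurable_const measurable_snd)

omit hα₁ hα₂ in
lemma Qc_meas (δ : ℝ) (N : ℕ) (k : ℕ × ℕ) : MeasurableSet (Qc δ N k) := by
  refine ((Sd_meas δ).inter measO).inter ?_
  have : Measurable (gidx N) := by
    unfold gidx
    exact (Nat.measurable_floor.comp (measurable_fst.const_mul _)).prodMk
      (Nat.measurable_floor.comp (measurable_snd.const_mul _))
  exact this (measurableSet_singleton k)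

omit hα₁ hα₂ in
lemma abs_lt_of_floor {N : ℕ} (hN : 0 < N) {x y : ℝ} (hx : 0 < x) (hy : 0 < y)
    (h : ⌊(N:ℝ) * x⌋₊ = ⌊(N:ℝ) * y⌋₊) : |x - y| ≤ 1 / N := by
  have hN' : (0:ℝ) < N := by exact_mod_cast hN
  have a1 := Nat.floor_le (show 0 ≤ (N:ℝ) * x by positivity)
  have a2 := Nat.lt_floor_add_one ((N:ℝ) * x)
  have b1 := Nat.floor_le (show 0 ≤ (N:ℝ) * y by positivity)
  have b2 := Nat.lt_floor_add_one ((N:ℝ) * y)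
  rw [h] at a1 a2
  rw [abs_le]
  constructor
  · rw [neg_le, le_div_iff₀ hN']; nlinarith
  · rw [le_div_iff₀ hN']; nlinarith

omit hα₁ hα₂ in
lemma Qc_sum (δ : ℝ) {N : ℕ} (hN0 : 0 < N) {f : ℝ × ℝ → ℝ} (hf : Integrable f muO) :
    ∫ p in Sd δ, f p ∂muO = ∑ k ∈ Finset.range N ×ˢ Finset.range N, ∫ p in Qc δ N k, f p ∂muO := by
  rw [← integral_biUnion_finset]
  · rw [Measure.restrict_restrict (Sd_meas δ)]
    rw [Measure.restrict_restrict]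
    · congr 2
      ext p
      simp only [mem_inter_iff, mem_iUnion, Qc, mem_preimage, mem_singleton_iff, exists_prop]
      constructor
      · rintro ⟨h1, h2⟩
        refine ⟨⟨gidx N p, ?_, ⟨h1, h2⟩, rfl⟩, h2⟩
        have hN : ∀ x ∈ Ioo (0:ℝ) 1, ⌊(N:ℝ) * x⌋₊ < N := by
          intro x hx
          rw [Nat.floor_lt' hN0.ne']
          have : (0:ℝ) < N := by exact_mod_cast hN0
          nlinarith [hx.2]
        simp only [Finset.mem_product, Finset.mem_range, gidx]
        exact ⟨hN _ h2.1, hN _ h2.2⟩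
      · rintro ⟨⟨k, -, h, -⟩, -⟩
        exact h
    · exact Finset.measurableSet_biUnion _ fun k _ => Qc_meas δ N k
  · exact fun k _ => Qc_meas δ N k
  · intro k _ l _ hkl
    rw [Function.onFun, Set.disjoint_left]
    rintro p ⟨-, h1⟩ ⟨-, h2⟩
    exact hkl (h1.symm.trans h2)
  · exact fun k _ => hf.integrableOn

lemma cell_test {φ : ℝ × ℝ → ℝ} (hφ : IsTest φ) {δ : ℝ} (hδ : 0 < δ) {N : ℕ} (hN : 0 < N) (k : ℕ × ℕ) :
    ∫ p in Qc δ N k, φ p ^ 2 ∂muO ≤ (muO.real (Qc δ N k))⁻¹ * (∫ p in Qc δ N k, φ p ∂muO) ^ 2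
      + ∫ p in Qc δ N k, (1 / (N * δ)) * (Ft α₁ φ p.2 + Gt α₂ φ p.1) ∂muO := by
  have c0 := test_cont hφ
  have c1 := Gt_cont hα₁ hα₂ hφ
  have c2 := Ft_cont hα₁ hα₂ hφ
  have hN' : (0:ℝ) < N := by exact_mod_cast hN
  have hA : Integrable (fun p : ℝ × ℝ => Ft α₁ φ p.2) (muO.restrict (Qc δ N k)) :=
    (cont_int (by fun_prop)).integrableOn
  have hB : Integrable (fun p : ℝ × ℝ => Gt α₂ φ p.1) (muO.restrict (Qc δ N k)) :=
    (cont_int (by fun_prop)).integrableOn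
  have key := cell_var (muO.restrict (Qc δ N k)) (u := φ)
    (A := fun p => (2 / (N * δ)) * Ft α₁ φ p.2) (B := fun p => (2 / (N * δ)) * Gt α₂ φ p.1)
    (cont_int c0).integrableOn (cont_int (by fun_prop)).integrableOn
    (hA.const_mul _) (hB.const_mul _) ?_
  · simp only [integral_const_mul] at key
    rw [measureReal_restrict_apply MeasurableSet.univ, univ_inter] at key
    rw [integral_const_mul, integral_add hA hB]
    rcases (measureReal_nonneg (μ := muO) (s := Qc δ N k)).eq_or_lt with h0 | h0
    · have : muO.restrict (Qc δ N k) = 0 := by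
        rw [Measure.restrict_eq_zero]
        exact (measureReal_eq_zero_iff (measure_ne_top _ _)).1 h0.symm
      rw [this]; simp
    · set m := muO.real (Qc δ N k)
      rw [← mul_le_mul_iff_right₀ h0]
      refine key.trans (le_of_eq ?_)
      field_simp
  · have hmem := ae_restrict_mem (μ := muO) (Qc_meas δ N k)
    filter_upwards [hmem] with q hq
    filter_upwards [hmem] with p hp
    obtain ⟨x, y⟩ := p
    obtain ⟨x', y'⟩ := q
    obtain ⟨⟨⟨-, hpδ⟩, hpO⟩, hpk⟩ := hp
    obtain ⟨⟨⟨hqδ, -⟩, hqO⟩, hqk⟩ := hq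
    simp only at hpδ hqδ
    have hk : gidx N (x, y) = gidx N (x', y') := hpk.trans hqk.symm
    simp only [gidx, Prod.mk.injEq] at hk
    have dx := abs_lt_of_floor hN hpO.1.1 hqO.1.1 hk.1
    have dy := abs_lt_of_floor hN hpO.2.1 hqO.2.1 hk.2
    have h1 := test_x hφ y (Ioo_subset_Icc_self hpO.1) (Ioo_subset_Icc_self hqO.1)
    have h2 := test_y hφ x' (Ioo_subset_Icc_self hpO.2) (Ioo_subset_Icc_self hqO.2)
    simp only at h1 h2 dx dy
    have f1 : δ * slX φ y ≤ Ft α₁ φ y :=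
      mul_le_mul_of_nonneg_right (hpδ.trans (wt_ge hα₁ hpO.2)) (slX_nonneg _ _)
    have f2 : δ * slY φ x' ≤ Gt α₂ φ x' :=
      mul_le_mul_of_nonneg_right (hqδ.trans (wt_ge hα₂ hqO.1)) (slY_nonneg _ _)
    have g1 : (φ (x, y) - φ (x', y)) ^ 2 ≤ 1 / (N * δ) * Ft α₁ φ y := by
      calc _ ≤ _ := h1
        _ ≤ 1 / N * slX φ y := mul_le_mul_of_nonneg_right dx (slX_nonneg _ _)
        _ = 1 / (N * δ) * (δ * slX φ y) := by field_simp
        _ ≤ _ := mul_le_mul_of_nonneg_left f1 (by positivity)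
    have g2 : (φ (x', y) - φ (x', y')) ^ 2 ≤ 1 / (N * δ) * Gt α₂ φ x' := by
      calc _ ≤ _ := h2
        _ ≤ 1 / N * slY φ x' := mul_le_mul_of_nonneg_right dy (slY_nonneg _ _)
        _ = 1 / (N * δ) * (δ * slY φ x') := by field_simp
        _ ≤ _ := mul_le_mul_of_nonneg_left f2 (by positivity)
    have e : 2 / (N * δ) = 2 * (1 / (N * δ)) := by ring
    simp only [e]
    nlinarith [sq_nonneg ((φ (x, y) - φ (x', y)) - (φ (x', y) - φ (x', y')))]

omit hα₁ hα₂ in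
lemma le_of_sq_le_sq' {a b : ℝ} (hb : 0 ≤ b) (h : a ^ 2 ≤ b ^ 2) : a ≤ b :=
  le_trans (le_abs_self a) (abs_le_of_sq_le_sq h hb)

omit hα₁ hα₂ in
/-- strip estimates -/
lemma strip {F G : ℝ → ℝ} (hF : Continuous F) (hG : Continuous G) (hF0 : ∀ y, 0 ≤ F y)
    (hG0 : ∀ y, 0 ≤ G y) {η : ℝ} (hη : 0 < η) {φ : ℝ × ℝ → ℝ} (hφ : Continuous φ)
    (h4 : ∀ p ∈ Omega, φ p ^ 4 ≤ G p.1 * F p.2) :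
    ∫ p in {p : ℝ × ℝ | p.1 < η ^ 2}, φ p ^ 2 ∂muO ≤ η / 2 * (∫ y, F y ∂rho1 + ∫ x, G x ∂rho1) := by
  have hm : MeasurableSet {p : ℝ × ℝ | p.1 < η ^ 2} := measurableSet_lt measurable_fst measurable_const
  have hm1 : MeasurableSet (Iio (η ^ 2)) := measurableSet_Iio
  set I : ℝ → ℝ := (Iio (η ^ 2)).indicator 1 with hI
  have iI : Integrable I rho1 := (integrable_const (1:ℝ)).indicator hm1
  have i1 : Integrable (fun p : ℝ × ℝ => I p.1 * F p.2) muO := by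
    rw [muO_eq]; exact iI.mul_prod (cont_int1 hF)
  have i2 : Integrable (fun p : ℝ × ℝ => G p.1 * 1) muO := by
    rw [muO_eq]; exact (cont_int1 hG).mul_prod (integrable_const 1)
  have e1 : ∫ p, I p.1 * F p.2 ∂muO ≤ η ^ 2 * ∫ y, F y ∂rho1 := by
    rw [muO_eq, integral_prod_mul]
    refine mul_le_mul_of_nonneg_right ?_ (integral_nonneg hF0)
    rw [hI, integral_indicator_one hm1, rho1, measureReal_restrict_apply hm1]
    have : Iio (η ^ 2) ∩ Ioo 0 1 ⊆ Ioo 0 (η ^ 2) := fun x hx => ⟨hx.2.1, hx.1⟩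
    refine (measureReal_mono this (by simp)).trans ?_
    simp [Real.volume_real_Ioo_of_le (sq_nonneg η)]
  have e2 : ∫ p : ℝ × ℝ, G p.1 * 1 ∂muO = ∫ x, G x ∂rho1 := by
    rw [muO_eq, integral_prod_mul G (fun _ => (1:ℝ))]; simp
  rw [← integral_indicator hm]
  calc _ ≤ ∫ p : ℝ × ℝ, (1 / (2 * η)) * (I p.1 * F p.2) + (η / 2) * (G p.1 * 1) ∂muO := by
        refine integral_mono_ae ((cont_int (by fun_prop)).indicator hm)
          ((i1.const_mul _).add (i2.const_mul _)) ?_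
        filter_upwards [ae_restrict_mem measO] with p hp
        by_cases hps : p.1 < η ^ 2
        · rw [indicator_of_mem (show p ∈ {p : ℝ × ℝ | p.1 < η ^ 2} from hps)]
          have : I p.1 = 1 := by rw [hI, indicator_of_mem (show p.1 ∈ Iio (η ^ 2) from hps)]; rfl
          rw [this]
          have h := h4 p hp
          have a := hF0 p.2
          have b := hG0 p.1
          have : 1 / (2 * η) * (1 * F p.2) + η / 2 * (G p.1 * 1) = (F p.2 / η + η * G p.1) / 2 := by
            field_simp
          rw [this]
          refine le_of_sq_le_sq' (by positivity) ?_
          have h5 : F p.2 / η * (η * G p.1) = F p.2 * G p.1 := by field_simp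
          nlinarith [sq_nonneg (F p.2 / η - η * G p.1)]
        · rw [indicator_of_notMem (show p ∉ {p : ℝ × ℝ | p.1 < η ^ 2} from hps)]
          have : 0 ≤ I p.1 := indicator_nonneg (fun _ _ => zero_le_one) _
          have a := hF0 p.2
          have b := hG0 p.1
          positivity
    _ = (1 / (2 * η)) * (∫ p, I p.1 * F p.2 ∂muO) + η / 2 * ∫ x, G x ∂rho1 := by
        rw [integral_add (i1.const_mul _) (i2.const_mul _), integral_const_mul, integral_const_mul, e2]
    _ ≤ (1 / (2 * η)) * (η ^ 2 * ∫ y, F y ∂rho1) + η / 2 * ∫ x, G x ∂rho1 := by gcongr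
    _ = _ := by field_simp

omit hα₁ hα₂ in
lemma strip_y {F G : ℝ → ℝ} (hF : Continuous F) (hG : Continuous G) (hF0 : ∀ y, 0 ≤ F y)
    (hG0 : ∀ y, 0 ≤ G y) {η : ℝ} (hη : 0 < η) {φ : ℝ × ℝ → ℝ} (hφ : Continuous φ)
    (h4 : ∀ p ∈ Omega, φ p ^ 4 ≤ G p.1 * F p.2) :
    ∫ p in {p : ℝ × ℝ | p.2 < η ^ 2}, φ p ^ 2 ∂muO ≤ η / 2 * (∫ y, F y ∂rho1 + ∫ x, G x ∂rho1) := by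
  have h := strip hG hF hG0 hF0 hη (φ := fun p => φ p.swap) (by fun_prop) (fun p hp => by
    have := h4 p.swap ⟨hp.2, hp.1⟩
    simpa [mul_comm] using this)
  have hm : MeasurableSet {p : ℝ × ℝ | p.1 < η ^ 2} := measurableSet_lt measurable_fst measurable_const
  have hm2 : MeasurableSet {p : ℝ × ℝ | p.2 < η ^ 2} := measurableSet_lt measurable_snd measurable_const
  rw [add_comm] at h
  refine le_trans (le_of_eq ?_) h
  rw [← integral_indicator hm, ← integral_indicator hm2, muO_eq, ← integral_prod_swap]
  rfl

lemma cpt_test {η : ℝ} (hη : 0 < η) : ∃ N : ℕ, ∀ φ : ℝ × ℝ → ℝ, IsTest φ →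
    ∫ p, φ p ^ 2 ∂muO ≤ ∑ k ∈ Finset.range N ×ˢ Finset.range N,
      (muO.real (Qc (η ^ 2) N k))⁻¹ * (∫ p in Qc (η ^ 2) N k, φ p ∂muO) ^ 2
      + 2 * η * (∫ p, (p.2 ^ α₁ * pdx φ p) ^ 2 ∂muO + ∫ p, (p.1 ^ α₂ * pdy φ p) ^ 2 ∂muO) := by
  obtain ⟨N, hN⟩ := exists_nat_gt (1 / η ^ 3)
  have hN' : (0:ℝ) < N := lt_trans (by positivity) hN
  have hN0 : 0 < N := by exact_mod_cast hN'
  refine ⟨N, fun φ hφ => ?_⟩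
  have c0 := test_cont hφ
  have c1 := Gt_cont hα₁ hα₂ hφ
  have c2 := Ft_cont hα₁ hα₂ hφ
  rw [← Ft_int hα₁ hα₂ hφ, ← Gt_int hα₁ hα₂ hφ]
  set EX := ∫ y, Ft α₁ φ y ∂rho1 with hEX
  set EY := ∫ x, Gt α₂ φ x ∂rho1 with hEY
  have hEX0 : 0 ≤ EX := integral_nonneg (Ft_nonneg _ _)
  have hEY0 : 0 ≤ EY := integral_nonneg (Gt_nonneg _ _)
  have h4 : ∀ p ∈ Omega, φ p ^ 4 ≤ Gt α₂ φ p.1 * Ft α₁ φ p.2 := fun p hp => pt4 hα₁ hα₂ hφ hp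
  have s1 := strip c2 c1 (Ft_nonneg _ _) (Gt_nonneg _ _) hη c0 h4
  have s2 := strip_y c2 c1 (Ft_nonneg _ _) (Gt_nonneg _ _) hη c0 h4
  have hm : MeasurableSet {p : ℝ × ℝ | p.1 < η ^ 2} := measurableSet_lt measurable_fst measurable_const
  have hm2 : MeasurableSet {p : ℝ × ℝ | p.2 < η ^ 2} := measurableSet_lt measurable_snd measurable_const
  have i0 : Integrable (fun p => φ p ^ 2) muO := cont_int (by fun_prop)
  have iF : Integrable (fun p : ℝ × ℝ => Ft α₁ φ p.2) muO := cont_int (by fun_prop)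
  have iG : Integrable (fun p : ℝ × ℝ => Gt α₂ φ p.1) muO := cont_int (by fun_prop)
  have iFG : Integrable (fun p : ℝ × ℝ => (1 / (N * η ^ 2)) * (Ft α₁ φ p.2 + Gt α₂ φ p.1)) muO :=
    (iF.add iG).const_mul _
  have eF : ∫ p : ℝ × ℝ, Ft α₁ φ p.2 ∂muO = EX := by
    have := integral_prod_mul (μ := rho1) (ν := rho1) (fun _ => (1:ℝ)) (Ft α₁ φ)
    simpa [← muO_eq] using this
  have eG : ∫ p : ℝ × ℝ, Gt α₂ φ p.1 ∂muO = EY := by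
    have := integral_prod_mul (μ := rho1) (ν := rho1) (Gt α₂ φ) (fun _ => (1:ℝ))
    simpa [← muO_eq] using this
  have s3 : ∫ p in Sd (η ^ 2), φ p ^ 2 ∂muO ≤ ∑ k ∈ Finset.range N ×ˢ Finset.range N,
      (muO.real (Qc (η ^ 2) N k))⁻¹ * (∫ p in Qc (η ^ 2) N k, φ p ∂muO) ^ 2 + η * (EX + EY) := by
    rw [Qc_sum (η ^ 2) hN0 i0]
    refine (Finset.sum_le_sum fun k _ => cell_test hα₁ hα₂ hφ (by positivity) hN0 k).trans ?_
    rw [Finset.sum_add_distrib, ← Qc_sum (η ^ 2) hN0 iFG]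
    gcongr
    refine (setIntegral_le_integral iFG (Filter.Eventually.of_forall fun p =>
      mul_nonneg (by positivity) (add_nonneg (Ft_nonneg _ _ _) (Gt_nonneg _ _ _)))).trans ?_
    rw [integral_const_mul, integral_add iF iG, eF, eG]
    refine mul_le_mul_of_nonneg_right ?_ (add_nonneg hEX0 hEY0)
    rw [div_le_iff₀ (by positivity)]
    rw [div_lt_iff₀ (by positivity)] at hN
    nlinarith
  have s0 : ∫ p, φ p ^ 2 ∂muO ≤ ∫ p in {p : ℝ × ℝ | p.1 < η ^ 2}, φ p ^ 2 ∂muO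
      + ∫ p in {p : ℝ × ℝ | p.2 < η ^ 2}, φ p ^ 2 ∂muO + ∫ p in Sd (η ^ 2), φ p ^ 2 ∂muO := by
    have i12 : Integrable (fun p => indicator {p : ℝ × ℝ | p.1 < η ^ 2} (fun p => φ p ^ 2) p
        + indicator {p : ℝ × ℝ | p.2 < η ^ 2} (fun p => φ p ^ 2) p) muO :=
      (i0.indicator hm).add (i0.indicator hm2)
    rw [← integral_indicator hm, ← integral_indicator hm2, ← integral_indicator (Sd_meas _),
      ← integral_add (i0.indicator hm) (i0.indicator hm2),
      ← integral_add i12 (i0.indicator (Sd_meas _))]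
    refine integral_mono i0 (i12.add (i0.indicator (Sd_meas _))) fun p => ?_
    have n1 : 0 ≤ indicator {p : ℝ × ℝ | p.1 < η ^ 2} (fun p => φ p ^ 2) p :=
      indicator_nonneg (fun _ _ => sq_nonneg _) _
    have n2 : 0 ≤ indicator {p : ℝ × ℝ | p.2 < η ^ 2} (fun p => φ p ^ 2) p :=
      indicator_nonneg (fun _ _ => sq_nonneg _) _
    have n3 : 0 ≤ indicator (Sd (η ^ 2)) (fun p => φ p ^ 2) p :=
      indicator_nonneg (fun _ _ => sq_nonneg _) _
    by_cases h1 : p.1 < η ^ 2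
    · have : indicator {p : ℝ × ℝ | p.1 < η ^ 2} (fun p => φ p ^ 2) p = φ p ^ 2 :=
        indicator_of_mem (show p ∈ {p : ℝ × ℝ | p.1 < η ^ 2} from h1) _
      simp only []
      linarith
    · by_cases h2 : p.2 < η ^ 2
      · have : indicator {p : ℝ × ℝ | p.2 < η ^ 2} (fun p => φ p ^ 2) p = φ p ^ 2 :=
          indicator_of_mem (show p ∈ {p : ℝ × ℝ | p.2 < η ^ 2} from h2) _
        simp only []
        linarith
      · have : indicator (Sd (η ^ 2)) (fun p => φ p ^ 2) p = φ p ^ 2 :=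
          indicator_of_mem (show p ∈ Sd (η ^ 2) from ⟨not_lt.1 h1, not_lt.1 h2⟩) _
        simp only []
        linarith
  linarith

end GapConcrete

section GapSpace
open scoped Topology

/-- L2 of the square -/
abbrev LL := Lp ℝ 2 muO
/-- triple product Hilbert space -/
abbrev WW := PiLp 2 (fun _ : Fin 3 => LL)

lemma ll_norm_sq (f : LL) : ‖f‖ ^ 2 = ∫ p, (f p) ^ 2 ∂muO := by
  rw [← real_inner_self_eq_norm_sq, L2.inner_def]
  refine integral_congr_ae (Eventually.of_forall fun p => ?_)
  simp [sq]

lemma ll_norm_sq' {f : LL} {u : ℝ × ℝ → ℝ} (h : f =ᵐ[muO] u) : ‖f‖ ^ 2 = ∫ p, (u p) ^ 2 ∂muO := by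
  rw [ll_norm_sq]
  exact integral_congr_ae (h.mono fun p hp => by simp only [hp])

lemma ll_inner {f g : LL} {u v : ℝ × ℝ → ℝ} (h : f =ᵐ[muO] u) (h' : g =ᵐ[muO] v) :
    inner ℝ f g = ∫ p, u p * v p ∂muO := by
  rw [L2.inner_def]
  refine integral_congr_ae ?_
  filter_upwards [h, h'] with p h1 h2
  simp [h1, h2, mul_comm]

/-- `w` represents the function `u` with derivatives `gx, gy` -/
structure Repr3 (α₁ α₂ : ℝ) (w : WW) (u gx gy : ℝ × ℝ → ℝ) : Prop where
  r0 : w 0 =ᵐ[muO] u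
  r1 : w 1 =ᵐ[muO] fun p => p.2 ^ α₁ * gx p
  r2 : w 2 =ᵐ[muO] fun p => p.1 ^ α₂ * gy p

variable {α₁ α₂ : ℝ}

lemma Repr3.norm_sq {w : WW} {u gx gy : ℝ × ℝ → ℝ} (h : Repr3 α₁ α₂ w u gx gy) :
    ‖w‖ ^ 2 = (∫ p, (u p) ^ 2 ∂muO) + (∫ p, (p.2 ^ α₁ * gx p) ^ 2 ∂muO) +
      ∫ p, (p.1 ^ α₂ * gy p) ^ 2 ∂muO := by
  rw [PiLp.norm_sq_eq_of_L2, Fin.sum_univ_three, ll_norm_sq' h.r0, ll_norm_sq' h.r1, ll_norm_sq' h.r2]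

lemma Repr3.add {w w' : WW} {u gx gy u' gx' gy' : ℝ × ℝ → ℝ} (h : Repr3 α₁ α₂ w u gx gy)
    (h' : Repr3 α₁ α₂ w' u' gx' gy') :
    Repr3 α₁ α₂ (w + w') (fun p => u p + u' p) (fun p => gx p + gx' p) (fun p => gy p + gy' p) := by
  refine ⟨?_, ?_, ?_⟩
  · filter_upwards [Lp.coeFn_add (w 0) (w' 0), h.r0, h'.r0] with p h1 h2 h3
    rw [PiLp.add_apply, h1, Pi.add_apply, h2, h3]
  · filter_upwards [Lp.coeFn_add (w 1) (w' 1), h.r1, h'.r1] with p h1 h2 h3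
    rw [PiLp.add_apply, h1, Pi.add_apply, h2, h3]; ring
  · filter_upwards [Lp.coeFn_add (w 2) (w' 2), h.r2, h'.r2] with p h1 h2 h3
    rw [PiLp.add_apply, h1, Pi.add_apply, h2, h3]; ring

lemma Repr3.smul {w : WW} {u gx gy : ℝ × ℝ → ℝ} (c : ℝ) (h : Repr3 α₁ α₂ w u gx gy) :
    Repr3 α₁ α₂ (c • w) (fun p => c * u p) (fun p => c * gx p) (fun p => c * gy p) := by
  refine ⟨?_, ?_, ?_⟩
  · filter_upwards [Lp.coeFn_smul c (w 0), h.r0] with p h1 h2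
    rw [PiLp.smul_apply, h1, Pi.smul_apply, h2, smul_eq_mul]
  · filter_upwards [Lp.coeFn_smul c (w 1), h.r1] with p h1 h2
    rw [PiLp.smul_apply, h1, Pi.smul_apply, h2, smul_eq_mul]; ring
  · filter_upwards [Lp.coeFn_smul c (w 2), h.r2] with p h1 h2
    rw [PiLp.smul_apply, h1, Pi.smul_apply, h2, smul_eq_mul]; ring

lemma Repr3.sub {w w' : WW} {u gx gy u' gx' gy' : ℝ × ℝ → ℝ} (h : Repr3 α₁ α₂ w u gx gy)
    (h' : Repr3 α₁ α₂ w' u' gx' gy') :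
    Repr3 α₁ α₂ (w - w') (fun p => u p - u' p) (fun p => gx p - gx' p) (fun p => gy p - gy' p) := by
  have := h.add (h'.smul (-1))
  rw [neg_one_smul, ← sub_eq_add_neg] at this
  simpa [sub_eq_add_neg] using this

lemma rep_zero : Repr3 α₁ α₂ 0 (fun _ => 0) (fun _ => 0) (fun _ => 0) := by
  have hz : ((0 : LL) : ℝ × ℝ → ℝ) =ᵐ[muO] fun _ => 0 := Lp.coeFn_zero _ _ _
  refine ⟨hz, ?_, ?_⟩
  · simpa using hz
  · simpa using hz

lemma Repr3.sum {k : ℕ} {w : Fin k → WW} {u gx gy : Fin k → ℝ × ℝ → ℝ} (c : Fin k → ℝ)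
    (h : ∀ i, Repr3 α₁ α₂ (w i) (u i) (gx i) (gy i)) (s : Finset (Fin k)) :
    Repr3 α₁ α₂ (∑ i ∈ s, c i • w i) (fun p => ∑ i ∈ s, c i * u i p) (fun p => ∑ i ∈ s, c i * gx i p)
      (fun p => ∑ i ∈ s, c i * gy i p) := by
  classical
  induction s using Finset.induction_on with
  | empty => simpa using rep_zero
  | insert a s ha ih =>
    simp only [Finset.sum_insert ha]
    exact ((h a).smul (c a)).add ih

lemma exists_rep {u gx gy : ℝ × ℝ → ℝ} (h0 : MemLp u 2 muO) (h1 : MemLp (fun p => p.2 ^ α₁ * gx p) 2 muO)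
    (h2 : MemLp (fun p => p.1 ^ α₂ * gy p) 2 muO) : ∃ w, Repr3 α₁ α₂ w u gx gy :=
  ⟨WithLp.toLp 2 ![h0.toLp _, h1.toLp _, h2.toLp _], h0.coeFn_toLp, h1.coeFn_toLp, h2.coeFn_toLp⟩

lemma test_add {φ ψ : ℝ × ℝ → ℝ} (h : IsTest φ) (h' : IsTest ψ) : IsTest (fun p => φ p + ψ p) :=
  ⟨h.1.add h'.1, h.2.1.add h'.2.1, (tsupport_add φ ψ).trans (union_subset h.2.2 h'.2.2)⟩

lemma test_smul {φ : ℝ × ℝ → ℝ} (c : ℝ) (h : IsTest φ) : IsTest (fun p => c * φ p) :=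
  ⟨contDiff_const.mul h.1, h.2.1.mul_left (f := fun _ => c), (tsupport_mul_subset_right (f := fun _ => c)).trans h.2.2⟩

lemma test_zero' : IsTest (fun _ => 0) :=
  ⟨contDiff_const, HasCompactSupport.zero, by
    have : (fun _ : ℝ × ℝ => (0:ℝ)) = 0 := rfl
    rw [this, tsupport_zero]; exact empty_subset _⟩

lemma pd_add {φ ψ : ℝ × ℝ → ℝ} (h : IsTest φ) (h' : IsTest ψ) :
    pdx (fun p => φ p + ψ p) = (fun p => pdx φ p + pdx ψ p) ∧
    pdy (fun p => φ p + ψ p) = (fun p => pdy φ p + pdy ψ p) := by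
  constructor <;> funext p <;>
  simp [pdx, pdy, fderiv_fun_add (test_diff h p) (test_diff h' p)]

lemma pd_smul {φ : ℝ × ℝ → ℝ} (c : ℝ) (h : IsTest φ) :
    pdx (fun p => c * φ p) = (fun p => c * pdx φ p) ∧
    pdy (fun p => c * φ p) = (fun p => c * pdy φ p) := by
  constructor <;> funext p <;>
  simp [pdx, pdy, fderiv_const_mul (test_diff h p)]

/-- the submodule of test triples -/
def Tsub (α₁ α₂ : ℝ) : Submodule ℝ WW where
  carrier := { w | ∃ φ, IsTest φ ∧ Repr3 α₁ α₂ w φ (pdx φ) (pdy φ) }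
  add_mem' := by
    rintro a b ⟨φ, h, r⟩ ⟨ψ, h', r'⟩
    refine ⟨_, test_add h h', ?_⟩
    rw [(pd_add h h').1, (pd_add h h').2]
    exact r.add r'
  zero_mem' := by
    refine ⟨_, test_zero', ?_⟩
    have e1 : pdx (fun _ => 0) = fun _ => 0 := by funext p; simp [pdx]
    have e2 : pdy (fun _ => 0) = fun _ => 0 := by funext p; simp [pdy]
    rw [e1, e2]
    exact rep_zero
  smul_mem' := by
    rintro c a ⟨φ, h, r⟩
    refine ⟨_, test_smul c h, ?_⟩
    rw [(pd_smul c h).1, (pd_smul c h).2]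
    exact r.smul c

lemma mem_Tsub {w : WW} : w ∈ Tsub α₁ α₂ ↔ ∃ φ, IsTest φ ∧ Repr3 α₁ α₂ w φ (pdx φ) (pdy φ) := Iff.rfl

lemma test_rep (hα₁ : α₁ ∈ Ioo (0:ℝ) (1/2)) (hα₂ : α₂ ∈ Ioo (0:ℝ) (1/2)) {φ : ℝ × ℝ → ℝ} (hφ : IsTest φ) :
    ∃ w, Repr3 α₁ α₂ w φ (pdx φ) (pdy φ) := by
  have c1 := wt_cont hα₁
  have c2 := wt_cont hα₂
  have d1 := test_contx hφ
  have d2 := test_conty hφ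
  exact exists_rep (cont_memLp (test_cont hφ) _)
    (cont_memLp ((c1.comp continuous_snd).mul d1) _) (cont_memLp ((c2.comp continuous_fst).mul d2) _)

/-- the Hilbert space -/
abbrev DD (α₁ α₂ : ℝ) := (Tsub α₁ α₂).topologicalClosure

/-- embedding -/
def iot (α₁ α₂ : ℝ) : DD α₁ α₂ →L[ℝ] LL :=
  (PiLp.proj 2 (fun _ : Fin 3 => LL) 0).comp (DD α₁ α₂).subtypeL

lemma iot_apply (w : DD α₁ α₂) : iot α₁ α₂ w = w.1 0 := rfl

lemma iot_le (w : DD α₁ α₂) : ‖iot α₁ α₂ w‖ ≤ ‖w‖ := PiLp.norm_apply_le w.1 0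

instance : CompleteSpace (DD α₁ α₂) :=
  (Submodule.isClosed_topologicalClosure _).completeSpace_coe

/-- test elements in the Hilbert space -/
def TT (α₁ α₂ : ℝ) : Set (DD α₁ α₂) := { w | w.1 ∈ Tsub α₁ α₂ }

lemma TT_dense : Dense (TT α₁ α₂) := by
  intro w
  rw [Metric.mem_closure_iff]
  intro ε hε
  obtain ⟨b, hb, hd⟩ := Metric.mem_closure_iff.1 (show w.1 ∈ closure (Tsub α₁ α₂ : Set WW) from w.2) ε hε
  exact ⟨⟨b, subset_closure hb⟩, hb, hd⟩

/-- closed conditions extend from test functions -/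
lemma DD_ext {P : WW → Prop} (hP : IsClosed {w | P w})
    (h : ∀ (w : WW) (φ : ℝ × ℝ → ℝ), IsTest φ → Repr3 α₁ α₂ w φ (pdx φ) (pdy φ) → P w) (w : DD α₁ α₂) : P w.1 := by
  have : closure (Tsub α₁ α₂ : Set WW) ⊆ {w | P w} :=
    closure_minimal (fun w hw => by obtain ⟨φ, h1, h2⟩ := hw; exact h w φ h1 h2) hP
  exact this w.2

/-- Fatou type closedness -/
lemma closed_eLpNorm (q C : ENNReal) : IsClosed {f : LL | eLpNorm f q muO ≤ C} := by
  refine IsSeqClosed.isClosed ?_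
  intro f g hf hfg
  have h1 : TendstoInMeasure muO (fun n => (f n : ℝ × ℝ → ℝ)) atTop g := tendstoInMeasure_of_tendsto_Lp hfg
  obtain ⟨ns, hns, hae⟩ := h1.exists_seq_tendsto_ae
  refine (Lp.eLpNorm_lim_le_liminf_eLpNorm (fun n => (Lp.aestronglyMeasurable (f (ns n)))) _ hae).trans ?_
  refine liminf_le_of_le (by isBoundedDefault) fun b hb => ?_
  obtain ⟨n, hn⟩ := hb.exists
  exact hn.trans (hf _)

lemma closed_nonneg : IsClosed {f : LL | 0 ≤ f} := isClosed_le continuous_const continuous_id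

end GapSpace

section GapSetupSec
open scoped Topology

lemma closed_eLpNorm2 (q : ENNReal) : IsClosed {x : LL × ℝ | eLpNorm x.1 q muO ≤ ENNReal.ofReal x.2} := by
  refine IsSeqClosed.isClosed ?_
  intro x y hx hxy
  have h1 : Tendsto (fun n => (x n).1) atTop (𝓝 y.1) := (continuous_fst.tendsto _).comp hxy
  have h2 : Tendsto (fun n => (x n).2) atTop (𝓝 y.2) := (continuous_snd.tendsto _).comp hxy
  have key : ∀ c, y.2 < c → eLpNorm y.1 q muO ≤ ENNReal.ofReal c := by
    intro c hc
    refine (closed_eLpNorm q (ENNReal.ofReal c)).mem_of_tendsto h1 ?_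
    filter_upwards [h2.eventually (eventually_lt_nhds hc)] with n hn
    exact (hx n).trans (ENNReal.ofReal_le_ofReal hn.le)
  have t : Tendsto (fun c => ENNReal.ofReal c) (𝓝[>] y.2) (𝓝 (ENNReal.ofReal y.2)) :=
    (ENNReal.continuous_ofReal.tendsto _).mono_left nhdsWithin_le_nhds
  exact ge_of_tendsto t (eventually_nhdsWithin_of_forall fun c hc => key c hc)

instance : ENNReal.HolderTriple 4 4 2 := ⟨by
  rw [show (4 : ENNReal) = 2 * 2 by norm_num, ENNReal.mul_inv (by simp) (by simp), ← two_mul, ← mul_assoc,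
    ENNReal.mul_inv_cancel (by simp) (by simp), one_mul]⟩
instance : Fact ((1 : ENNReal) ≤ 4) := ⟨by norm_num⟩

variable {α₁ α₂ : ℝ}

lemma L4_le (hα₁ : α₁ ∈ Ioo (0:ℝ) (1/2)) (hα₂ : α₂ ∈ Ioo (0:ℝ) (1/2)) (w : DD α₁ α₂) :
    eLpNorm (iot α₁ α₂ w) 4 muO ≤ ENNReal.ofReal ‖w‖ := by
  refine DD_ext (P := fun w => eLpNorm (w 0) 4 muO ≤ ENNReal.ofReal ‖w‖) ?_ ?_ w
  · exact (closed_eLpNorm2 4).preimage (f := fun w : WW => ((w 0, ‖w‖) : LL × ℝ))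
      ((PiLp.continuous_apply 2 _ 0).prodMk continuous_norm)
  · intro w φ hφ hr
    rw [eLpNorm_congr_ae hr.r0, (cont_memLp (test_cont hφ) 4).eLpNorm_eq_integral_rpow_norm (by simp) (by simp)]
    refine ENNReal.ofReal_le_ofReal ?_
    have h4 := L4_test hα₁ hα₂ hφ
    have hn := hr.norm_sq
    have e : ∫ p, ‖φ p‖ ^ (4 : ENNReal).toReal ∂muO = ∫ p, φ p ^ 4 ∂muO := by
      refine integral_congr_ae (Eventually.of_forall fun p => ?_)
      have : (4 : ENNReal).toReal = ((4 : ℕ) : ℝ) := by simp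
      simp only [this, Real.rpow_natCast, Real.norm_eq_abs]
      exact Even.pow_abs (by decide) _
    rw [e]
    set A := ∫ p, φ p ^ 2 ∂muO
    set B := ∫ p, (p.2 ^ α₁ * pdx φ p) ^ 2 ∂muO
    set C := ∫ p, (p.1 ^ α₂ * pdy φ p) ^ 2 ∂muO
    have hA : 0 ≤ A := integral_nonneg fun _ => sq_nonneg _
    have hB : 0 ≤ B := integral_nonneg fun _ => sq_nonneg _
    have hC : 0 ≤ C := integral_nonneg fun _ => sq_nonneg _
    have h0 : 0 ≤ ∫ p, φ p ^ 4 ∂muO := integral_nonneg fun _ => by positivity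
    have : ∫ p, φ p ^ 4 ∂muO ≤ ‖w‖ ^ 4 := by
      have : ‖w‖ ^ 4 = (‖w‖ ^ 2) ^ 2 := by ring
      rw [this, hn]; nlinarith [mul_nonneg hA hB, mul_nonneg hA hC, mul_nonneg hB hC]
    refine (Real.rpow_le_rpow h0 this (by simp)).trans ?_
    have e4 : (4 : ENNReal).toReal⁻¹ = ((4 : ℕ) : ℝ)⁻¹ := by simp
    rw [e4, Real.pow_rpow_inv_natCast (norm_nonneg _) (by norm_num)]

lemma exists_m (hα₁ : α₁ ∈ Ioo (0:ℝ) (1/2)) (hα₂ : α₂ ∈ Ioo (0:ℝ) (1/2)) :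
    ∃ m : DD α₁ α₂ →L[ℝ] DD α₁ α₂ →L[ℝ] LL, ∀ w w', m w w' =ᵐ[muO] fun p =>
      iot α₁ α₂ w p * iot α₁ α₂ w' p := by
  have hm : ∀ w, MemLp (iot α₁ α₂ w) 4 muO := fun w =>
    ⟨Lp.aestronglyMeasurable _, (L4_le hα₁ hα₂ w).trans_lt ENNReal.ofReal_lt_top⟩
  let κ0 : DD α₁ α₂ →ₗ[ℝ] Lp ℝ 4 muO :=
    { toFun := fun w => (hm w).toLp _
      map_add' := fun w w' => by
        rw [← MemLp.toLp_add]
        refine MemLp.toLp_congr _ _ ?_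
        rw [map_add]; exact Lp.coeFn_add _ _
      map_smul' := fun c w => by
        rw [RingHom.id_apply, ← MemLp.toLp_const_smul]
        refine MemLp.toLp_congr _ _ ?_
        rw [map_smul]; exact Lp.coeFn_smul _ _ }
  let κ : DD α₁ α₂ →L[ℝ] Lp ℝ 4 muO := κ0.mkContinuous 1 fun w => by
    change ‖(hm w).toLp _‖ ≤ _
    rw [Lp.norm_toLp, one_mul]
    exact ENNReal.toReal_le_of_le_ofReal (norm_nonneg _) (L4_le hα₁ hα₂ w)
  have hκ : ∀ w, κ w =ᵐ[muO] iot α₁ α₂ w := fun w => (hm w).coeFn_toLp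
  refine ⟨((ContinuousLinearMap.mul ℝ ℝ).holderL muO 4 4 2).bilinearComp κ κ, fun w w' => ?_⟩
  filter_upwards [(ContinuousLinearMap.mul ℝ ℝ).coeFn_holder (r := 2) (κ w) (κ w'), hκ w, hκ w'] with p h1 h2 h3
  rw [← h2, ← h3]
  exact h1

/-- admissible potentials in L2 -/
def SS (pp M : ℝ) : Set LL := {v | 0 ≤ v ∧ eLpNorm v (ENNReal.ofReal pp) muO ≤ ENNReal.ofReal M}

lemma SS_closed (pp M : ℝ) : IsClosed (SS pp M) := closed_nonneg.inter (closed_eLpNorm _ _)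

lemma SS_conv {pp : ℝ} (hp : 2 < pp) (M : ℝ) : Convex ℝ (SS pp M) := by
  rintro f ⟨hf0, hf⟩ g ⟨hg0, hg⟩ a b ha hb hab
  have sn : ∀ (c : ℝ) (k : LL), 0 ≤ c → 0 ≤ k → 0 ≤ c • k := by
    intro c k hc hk
    rw [← Lp.coeFn_nonneg] at hk ⊢
    filter_upwards [hk, Lp.coeFn_smul c k] with p h1 h2
    rw [h2]
    exact mul_nonneg hc h1
  refine ⟨add_nonneg (sn _ _ ha hf0) (sn _ _ hb hg0), ?_⟩
  have e : ((a • f + b • g : LL) : ℝ × ℝ → ℝ) =ᵐ[muO] a • (f : ℝ × ℝ → ℝ) + b • (g : ℝ × ℝ → ℝ) :=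
    (Lp.coeFn_add _ _).trans ((Lp.coeFn_smul _ _).add (Lp.coeFn_smul _ _))
  have mf := Lp.aestronglyMeasurable f
  have mg := Lp.aestronglyMeasurable g
  rw [eLpNorm_congr_ae e]
  refine (eLpNorm_add_le (mf.const_smul a) (mg.const_smul b) ?_).trans ?_
  · rw [ENNReal.one_le_ofReal]; linarith
  rw [eLpNorm_const_smul, eLpNorm_const_smul]
  calc _ ≤ ‖a‖ₑ * ENNReal.ofReal M + ‖b‖ₑ * ENNReal.ofReal M := by gcongr
    _ = ENNReal.ofReal M := by
      rw [← add_mul, Real.enorm_of_nonneg ha, Real.enorm_of_nonneg hb, ← ENNReal.ofReal_add ha hb, hab]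
      simp

lemma SS_bound {pp M : ℝ} (hp : 2 < pp) (hM : 0 < M) {v : LL} (hv : v ∈ SS pp M) : ‖v‖ ≤ M := by
  rw [Lp.norm_def]
  refine ENNReal.toReal_le_of_le_ofReal hM.le ?_
  refine (eLpNorm_le_eLpNorm_of_exponent_le ?_ (Lp.aestronglyMeasurable v)).trans hv.2
  rw [show (2 : ENNReal) = ENNReal.ofReal 2 by simp]
  exact ENNReal.ofReal_le_ofReal hp.le

lemma SS_ne {pp M : ℝ} : (SS pp M).Nonempty := by
  refine ⟨0, le_rfl, ?_⟩
  rw [eLpNorm_congr_ae (Lp.coeFn_zero ℝ 2 muO), eLpNorm_zero]; simp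

lemma bump_test (c : ℝ × ℝ) (hc : Metric.closedBall c (1/5) ⊆ Omega) : ∃ φ : ℝ × ℝ → ℝ, IsTest φ ∧
    (∀ p ∈ Metric.closedBall c (1/10), φ p = 1) ∧ (∀ p, p ∉ Metric.ball c (1/5) → φ p = 0) := by
  let f : ContDiffBump c := ⟨1/10, 1/5, by norm_num, by norm_num⟩
  refine ⟨f, ⟨f.contDiff, f.hasCompactSupport, ?_⟩, fun p hp => f.one_of_mem_closedBall hp, fun p hp => ?_⟩
  · rw [f.tsupport_eq]; exact hc
  · by_contra h
    have : p ∈ Function.support f := h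
    rw [f.support_eq] at this
    exact hp this

lemma ball_meas (c : ℝ × ℝ) (hc : Metric.closedBall c (1/5) ⊆ Omega) {P : ℝ × ℝ → Prop} (h : ∀ᵐ p ∂muO, P p) :
    ∃ p ∈ Metric.closedBall c (1/10), P p := by
  by_contra hcon
  push Not at hcon
  have h1 : muO (Metric.ball c (1/10)) = 0 := 
    measure_mono_null (fun p hp => hcon p (Metric.ball_subset_closedBall hp)) h
  rw [muO, Measure.restrict_apply measurableSet_ball, inter_eq_self_of_subset_left] at h1
  · exact (Metric.measure_ball_pos volume c (by norm_num)).ne' h1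
  · exact (Metric.ball_subset_closedBall.trans (Metric.closedBall_subset_closedBall (by norm_num))).trans hc

lemma two_indep (hα₁ : α₁ ∈ Ioo (0:ℝ) (1/2)) (hα₂ : α₂ ∈ Ioo (0:ℝ) (1/2)) :
    ∃ w : Fin 2 → DD α₁ α₂, ∀ c : Fin 2 → ℝ, ∑ i, c i • iot α₁ α₂ (w i) = 0 → c = 0 := by
  have hs : ∀ x : ℝ, x ∈ Icc (1/4:ℝ) (3/4) → Metric.closedBall ((x, 1/2) : ℝ × ℝ) (1/5) ⊆ Omega := by
    intro x hx p hp
    rw [← closedBall_prod_same, Real.closedBall_eq_Icc, Real.closedBall_eq_Icc] at hp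
    obtain ⟨⟨a, b⟩, c, d⟩ := hp
    obtain ⟨e, f⟩ := hx
    refine ⟨⟨?_, ?_⟩, ?_, ?_⟩ <;> linarith
  have h1 := hs (1/4) (by constructor <;> norm_num)
  have h2 := hs (3/4) (by constructor <;> norm_num)
  obtain ⟨φ, hφ, f1, f0⟩ := bump_test _ h1
  obtain ⟨ψ, hψ, g1, g0⟩ := bump_test _ h2
  obtain ⟨w, hw⟩ := test_rep hα₁ hα₂ hφ
  obtain ⟨w', hw'⟩ := test_rep hα₁ hα₂ hψ
  refine ⟨![⟨w, subset_closure ⟨φ, hφ, hw⟩⟩, ⟨w', subset_closure ⟨ψ, hψ, hw'⟩⟩], fun c hc => ?_⟩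
  simp only [Fin.sum_univ_two, Matrix.cons_val_zero, Matrix.cons_val_one, iot_apply] at hc
  have hz := Lp.coeFn_zero ℝ 2 muO
  rw [← hc] at hz
  have hae : ∀ᵐ p ∂muO, c 0 * φ p + c 1 * ψ p = 0 := by
    filter_upwards [hz, Lp.coeFn_add (c 0 • w 0) (c 1 • w' 0), Lp.coeFn_smul (c 0) (w 0),
      Lp.coeFn_smul (c 1) (w' 0), hw.r0, hw'.r0] with p a1 a2 a3 a4 a5 a6
    rw [a2, Pi.add_apply, a3, a4, Pi.smul_apply, Pi.smul_apply, a5, a6] at a1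
    exact a1
  obtain ⟨p, hp, e1⟩ := ball_meas _ h1 hae
  obtain ⟨q, hq, e2⟩ := ball_meas _ h2 hae
  have z1 : ψ p = 0 := g0 p fun h => by
    rw [← closedBall_prod_same, Real.closedBall_eq_Icc] at hp
    rw [← ball_prod_same, Real.ball_eq_Ioo] at h
    have a := hp.1.2
    have b := h.1.1
    norm_num at a b; linarith
  have z2 : φ q = 0 := f0 q fun h => by
    rw [← closedBall_prod_same, Real.closedBall_eq_Icc] at hq
    rw [← ball_prod_same, Real.ball_eq_Ioo] at h
    have a := hq.1.1
    have b := h.1.2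
    norm_num at a b; linarith
  rw [f1 p hp, z1] at e1
  rw [g1 q hq, z2] at e2
  funext i
  fin_cases i
  · simpa using e1
  · simpa using e2

lemma cpt_DD (hα₁ : α₁ ∈ Ioo (0:ℝ) (1/2)) (hα₂ : α₂ ∈ Ioo (0:ℝ) (1/2)) {ε : ℝ} (hε : 0 < ε) :
    ∃ (s : Finset (ℕ × ℕ)) (z : ℕ × ℕ → LL), ∀ w : DD α₁ α₂,
      ‖iot α₁ α₂ w‖ ^ 2 ≤ ∑ i ∈ s, (inner ℝ (z i) (iot α₁ α₂ w)) ^ 2 + ε * ‖w‖ ^ 2 := by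
  obtain ⟨N, hN⟩ := cpt_test hα₁ hα₂ (half_pos hε)
  let Q := Qc ((ε / 2) ^ 2) N
  refine ⟨Finset.range N ×ˢ Finset.range N, fun k => Real.sqrt (muO.real (Q k))⁻¹ •
    indicatorConstLp 2 (Qc_meas ((ε / 2) ^ 2) N k) (measure_ne_top muO _) (1:ℝ), fun w => ?_⟩
  refine DD_ext (P := fun w : WW => ‖w 0‖ ^ 2 ≤ ∑ k ∈ Finset.range N ×ˢ Finset.range N,
    (inner ℝ (Real.sqrt (muO.real (Q k))⁻¹ •
    indicatorConstLp 2 (Qc_meas ((ε / 2) ^ 2) N k) (measure_ne_top muO _) (1:ℝ) : LL) (w 0)) ^ 2 + ε * ‖w‖ ^ 2) ?_ ?_ w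
  · have c0 : Continuous (fun w : WW => w 0) := PiLp.continuous_apply 2 _ 0
    refine isClosed_le (by fun_prop) ?_
    refine Continuous.add ?_ (by fun_prop)
    refine continuous_finsetSum _ fun k _ => ?_
    exact (continuous_const.inner c0).pow 2
  · intro w φ hφ hr
    have h := hN φ hφ
    have hn := hr.norm_sq
    rw [ll_norm_sq' hr.r0]
    have e : ∀ k, (inner ℝ (Real.sqrt (muO.real (Q k))⁻¹ •
      indicatorConstLp 2 (Qc_meas ((ε / 2) ^ 2) N k) (measure_ne_top muO _) (1:ℝ) : LL) (w 0)) ^ 2 =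
      (muO.real (Q k))⁻¹ * (∫ p in Q k, φ p ∂muO) ^ 2 := by
      intro k
      rw [real_inner_smul_left, mul_pow, Real.sq_sqrt (inv_nonneg.2 measureReal_nonneg),
        L2.inner_indicatorConstLp_one (Qc_meas ((ε / 2) ^ 2) N k) (measure_ne_top muO _) (w 0)]
      rw [integral_congr_ae (ae_restrict_of_ae hr.r0)]
    simp only [e]
    refine h.trans ?_
    rw [hn]
    have hA : 0 ≤ ∫ p, φ p ^ 2 ∂muO := integral_nonneg fun _ => sq_nonneg _
    have : 0 ≤ ε * ∫ p, φ p ^ 2 ∂muO := mul_nonneg hε.le hA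
    have e2 : 2 * (ε / 2) = ε := by ring
    rw [e2]
    linarith

theorem setup (hα₁ : α₁ ∈ Ioo (0:ℝ) (1/2)) (hα₂ : α₂ ∈ Ioo (0:ℝ) (1/2)) {pp M : ℝ} (hp : 2 < pp) (hM : 0 < M)
    {m : DD α₁ α₂ →L[ℝ] DD α₁ α₂ →L[ℝ] LL} (hm : ∀ w w', m w w' =ᵐ[muO] fun p =>
      iot α₁ α₂ w p * iot α₁ α₂ w' p) : GapSetup (iot α₁ α₂) m (SS pp M) (TT α₁ α₂) M where
  hι := iot_le
  symm w w' := by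
    refine Lp.ext ?_
    filter_upwards [hm w w', hm w' w] with p h1 h2
    rw [h1, h2, mul_comm]
  nonneg v hv w := by
    rw [ll_inner (ae_eq_refl v) (hm w w)]
    refine integral_nonneg_of_ae ?_
    filter_upwards [(Lp.coeFn_nonneg v).2 hv.1] with p h1
    exact mul_nonneg h1 (mul_self_nonneg _)
  bound v hv := SS_bound hp hM hv
  conv := SS_conv hp M
  closed := SS_closed pp M
  ne := SS_ne
  dense := TT_dense
  bdT w' hw' := by
    obtain ⟨φ, hφ, hr⟩ := hw'
    obtain ⟨C, hC⟩ := hφ.2.1.exists_bound_of_continuous (test_cont hφ)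
    refine ⟨C, fun w => Lp.norm_le_mul_norm_of_ae_le_mul ?_⟩
    filter_upwards [hm w w', hr.r0] with p h1 h2
    have : iot α₁ α₂ w' p = φ p := h2
    rw [h1, norm_mul, this, mul_comm]
    exact mul_le_mul_of_nonneg_right (hC p) (norm_nonneg _)
  cpt ε hε := cpt_DD hα₁ hα₂ hε
  two := two_indep hα₁ hα₂

end GapSetupSec

section GapTransl
open scoped Topology

variable {α₁ α₂ : ℝ}

lemma H1Norm_eq {w : WW} {u gx gy : ℝ × ℝ → ℝ} (h : Repr3 α₁ α₂ w u gx gy) : H1Norm α₁ α₂ u gx gy = ‖w‖ := by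
  rw [H1Norm, ← Real.sqrt_sq (norm_nonneg w), h.norm_sq]

lemma lemA (hα₁ : α₁ ∈ Ioo (0:ℝ) (1/2)) (hα₂ : α₂ ∈ Ioo (0:ℝ) (1/2)) {u gx gy : ℝ × ℝ → ℝ}
    (h : MemH10 α₁ α₂ u gx gy) : ∃ w : DD α₁ α₂, Repr3 α₁ α₂ w.1 u gx gy := by
  obtain ⟨h1, h2⟩ := h
  obtain ⟨w, hw⟩ := exists_rep (α₁ := α₁) (α₂ := α₂) h1.memL2 h1.wgx h1.wgy
  refine ⟨⟨w, Metric.mem_closure_iff.2 fun ε hε => ?_⟩, hw⟩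
  obtain ⟨φ, hφ, hd⟩ := h2 ε hε
  obtain ⟨w', hw'⟩ := test_rep hα₁ hα₂ hφ
  refine ⟨w', ⟨φ, hφ, hw'⟩, ?_⟩
  rwa [H1Norm_eq (hw.sub hw'), ← dist_eq_norm] at hd

lemma openO : IsOpen Omega := isOpen_Ioo.prod isOpen_Ioo

lemma weak_gen (v : ℝ × ℝ) (i : Fin 3) (ω : ℝ × ℝ → ℝ) (hω : ContinuousOn ω Omega)
    (hpos : ∀ p ∈ Omega, ω p ≠ 0) (hmeas : Measurable ω)
    (hrep : ∀ (w : WW) (χ : ℝ × ℝ → ℝ), IsTest χ → Repr3 α₁ α₂ w χ (pdx χ) (pdy χ) →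
      w i =ᵐ[muO] fun p => ω p * fderiv ℝ χ p v) (w : DD α₁ α₂) {φ : ℝ × ℝ → ℝ} (hφ : IsTest φ) :
    ∫ p, w.1 0 p * fderiv ℝ φ p v ∂muO = - ∫ p, ((ω p)⁻¹ * w.1 i p) * φ p ∂muO := by
  have hdc : ∀ {χ : ℝ × ℝ → ℝ}, IsTest χ → Continuous (fun p => fderiv ℝ χ p v) := fun h =>
    (h.1.continuous_fderiv (by simp)).clm_apply continuous_const
  have m1 : MemLp (fun p => fderiv ℝ φ p v) 2 muO := cont_memLp (hdc hφ) 2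
  have m2 : MemLp (fun p => (ω p)⁻¹ * φ p) 2 muO := by
    have hc : ContinuousOn (fun p => (ω p)⁻¹ * φ p) (tsupport φ) :=
      ((hω.mono hφ.2.2).inv₀ fun p hp => hpos p (hφ.2.2 hp)).mul (test_cont hφ).continuousOn
    obtain ⟨C, hC⟩ := (show IsCompact (tsupport φ) from hφ.2.1).exists_bound_of_continuousOn hc
    refine MemLp.of_bound (hmeas.inv.mul (test_cont hφ).measurable).aestronglyMeasurable (max C 0)
      (Eventually.of_forall fun p => ?_)
    by_cases hp : p ∈ tsupport φ
    · exact (hC p hp).trans (le_max_left _ _)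
    · rw [image_eq_zero_of_notMem_tsupport hp]; simp
  have key : inner ℝ (w.1 0) (m1.toLp _) = - inner ℝ (w.1 i) (m2.toLp _) := by
    refine DD_ext (P := fun w : WW => inner ℝ (w 0) (m1.toLp _) = - inner ℝ (w i) (m2.toLp _)) ?_ ?_ w
    · have c0 : Continuous (fun w : WW => w 0) := PiLp.continuous_apply 2 _ 0
      have c1 : Continuous (fun w : WW => w i) := PiLp.continuous_apply 2 _ i
      exact isClosed_eq (c0.inner continuous_const) (c1.inner continuous_const).neg
    · intro w χ hχ hr
      rw [ll_inner hr.r0 m1.coeFn_toLp, ll_inner (hrep w χ hχ hr) m2.coeFn_toLp]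
      have e : ∫ p, ω p * fderiv ℝ χ p v * ((ω p)⁻¹ * φ p) ∂muO = ∫ p, fderiv ℝ χ p v * φ p ∂muO := by
        refine integral_congr_ae ?_
        filter_upwards [ae_restrict_mem measO] with p hp
        have := hpos p hp
        field_simp
      rw [e]
      have z1 : ∫ p, χ p * fderiv ℝ φ p v ∂muO = ∫ p, χ p * fderiv ℝ φ p v :=
        setIntegral_eq_integral_of_forall_compl_eq_zero fun p hp => by rw [test_zero hχ hp, zero_mul]
      have z2 : ∫ p, fderiv ℝ χ p v * φ p ∂muO = ∫ p, fderiv ℝ χ p v * φ p :=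
        setIntegral_eq_integral_of_forall_compl_eq_zero fun p hp => by rw [test_zero hφ hp, mul_zero]
      rw [z1, z2]
      have cφ := test_cont hφ
      have cχ := test_cont hχ
      have dφ := hdc hφ
      have dχ := hdc hχ
      refine integral_mul_fderiv_eq_neg_fderiv_mul_of_integrable ?_ ?_ ?_
        (fun x _ => test_diff hχ x) (fun x _ => test_diff hφ x)
      · exact (dχ.mul cφ).integrable_of_hasCompactSupport (hφ.2.1.mul_left)
      · exact (cχ.mul dφ).integrable_of_hasCompactSupport (hχ.2.1.mul_right)
      · exact (cχ.mul cφ).integrable_of_hasCompactSupport (hχ.2.1.mul_right)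
  rw [ll_inner (ae_eq_refl _) m1.coeFn_toLp, ll_inner (ae_eq_refl _) m2.coeFn_toLp] at key
  rw [key]
  congr 1
  refine integral_congr_ae (Eventually.of_forall fun p => ?_)
  simp only []
  ring

lemma loc_int (f : LL) : LocallyIntegrableOn (fun p => f p) Omega volume := by
  have : Integrable f muO := (Lp.memLp f).integrable (by norm_num)
  exact IntegrableOn.locallyIntegrableOn this

lemma w1_cont : ContinuousOn (fun p : ℝ × ℝ => p.2 ^ α₁) Omega := by
  intro p hp
  exact (Real.continuousAt_rpow_const _ _ (Or.inl hp.2.1.ne')).comp_continuousWithinAt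
    (f := Prod.snd) (s := Omega) continuous_snd.continuousWithinAt

lemma w2_cont : ContinuousOn (fun p : ℝ × ℝ => p.1 ^ α₂) Omega := by
  intro p hp
  exact (Real.continuousAt_rpow_const _ _ (Or.inl hp.1.1.ne')).comp_continuousWithinAt
    (f := Prod.fst) (s := Omega) continuous_fst.continuousWithinAt

lemma w1_ne (p : ℝ × ℝ) (hp : p ∈ Omega) : p.2 ^ α₁ ≠ 0 := (Real.rpow_pos_of_pos hp.2.1 _).ne'
lemma w2_ne (p : ℝ × ℝ) (hp : p ∈ Omega) : p.1 ^ α₂ ≠ 0 := (Real.rpow_pos_of_pos hp.1.1 _).ne'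

lemma repr_self (w : WW) : Repr3 α₁ α₂ w (fun p => w 0 p) (fun p => (p.2 ^ α₁)⁻¹ * w 1 p)
    (fun p => (p.1 ^ α₂)⁻¹ * w 2 p) := by
  refine ⟨ae_eq_refl _, ?_, ?_⟩
  · filter_upwards [ae_restrict_mem measO] with p hp
    have := w1_ne (α₁ := α₁) p hp
    field_simp
  · filter_upwards [ae_restrict_mem measO] with p hp
    have := w2_ne (α₂ := α₂) p hp
    field_simp

lemma lemB (w : DD α₁ α₂) : MemH10 α₁ α₂ (fun p => w.1 0 p) (fun p => (p.2 ^ α₁)⁻¹ * w.1 1 p)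
    (fun p => (p.1 ^ α₂)⁻¹ * w.1 2 p) := by
  have hr := repr_self (α₁ := α₁) (α₂ := α₂) w.1
  refine ⟨⟨Lp.memLp _, ⟨loc_int _, ?_, ?_⟩, ⟨loc_int _, ?_, ?_⟩, ?_, ?_⟩, ?_⟩
  · exact (loc_int (w.1 1)).continuousOn_mul (w1_cont.inv₀ w1_ne) openO.isLocallyClosed
  · intro φ hφ
    refine weak_gen (α₁ := α₁) (α₂ := α₂) (1, 0) 1 (fun p => p.2 ^ α₁) w1_cont w1_ne (by fun_prop) ?_ w hφ
    intro w χ _ h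
    exact h.r1
  · exact (loc_int (w.1 2)).continuousOn_mul (w2_cont.inv₀ w2_ne) openO.isLocallyClosed
  · intro φ hφ
    refine weak_gen (α₁ := α₁) (α₂ := α₂) (0, 1) 2 (fun p => p.1 ^ α₂) w2_cont w2_ne (by fun_prop) ?_ w hφ
    intro w χ _ h
    exact h.r2
  · exact (memLp_congr_ae hr.r1).1 (Lp.memLp _)
  · exact (memLp_congr_ae hr.r2).1 (Lp.memLp _)
  · intro ε hε
    obtain ⟨b, ⟨φ, hφ, hb⟩, hd⟩ :=
      Metric.mem_closure_iff.1 (show w.1 ∈ closure (Tsub α₁ α₂ : Set WW) from w.2) ε hε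
    refine ⟨φ, hφ, ?_⟩
    rwa [H1Norm_eq (hr.sub hb), ← dist_eq_norm]

variable {m : DD α₁ α₂ →L[ℝ] DD α₁ α₂ →L[ℝ] LL}

lemma Vuu (hm : ∀ w w', m w w' =ᵐ[muO] fun p => iot α₁ α₂ w p * iot α₁ α₂ w' p) {V : ℝ × ℝ → ℝ} {v : LL}
    (hv : v =ᵐ[muO] V) {w : DD α₁ α₂} {u gx gy : ℝ × ℝ → ℝ} (h : Repr3 α₁ α₂ w.1 u gx gy) :
    Integrable (fun p => V p * u p * u p) muO ∧ inner ℝ v (m w w) = ∫ p, V p * u p * u p ∂muO := by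
  have e : m w w =ᵐ[muO] fun p => u p * u p := by
    filter_upwards [hm w w, h.r0] with p h1 h2
    have : iot α₁ α₂ w p = u p := h2
    rw [h1, this]
  constructor
  · have := (Lp.memLp v).integrable_mul (Lp.memLp (m w w))
    refine this.congr ?_
    filter_upwards [hv, e] with p h1 h2
    rw [Pi.mul_apply, h1, h2]; ring
  · rw [ll_inner hv e]
    refine integral_congr_ae (Eventually.of_forall fun p => ?_)
    simp only []
    ring

lemma lemC (hm : ∀ w w', m w w' =ᵐ[muO] fun p => iot α₁ α₂ w p * iot α₁ α₂ w' p) {V : ℝ × ℝ → ℝ} {v : LL}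
    (hv : v =ᵐ[muO] V) {w : DD α₁ α₂} {u gx gy : ℝ × ℝ → ℝ} (h : Repr3 α₁ α₂ w.1 u gx gy) :
    aForm α₁ α₂ V u gx gy u gx gy = qf (iot α₁ α₂) m v w := by
  obtain ⟨iV, eV⟩ := Vuu hm hv h
  have m1 : MemLp (fun p => p.2 ^ α₁ * gx p) 2 muO := (memLp_congr_ae h.r1).1 (Lp.memLp _)
  have m2 : MemLp (fun p => p.1 ^ α₂ * gy p) 2 muO := (memLp_congr_ae h.r2).1 (Lp.memLp _)
  have i1 : Integrable (fun p => (p.2 ^ α₁ * gx p) * (p.2 ^ α₁ * gx p)) muO := m1.integrable_mul m1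
  have i2 : Integrable (fun p => (p.1 ^ α₂ * gy p) * (p.1 ^ α₂ * gy p)) muO := m2.integrable_mul m2
  have i12 : Integrable (fun p => (p.2 ^ α₁ * gx p) * (p.2 ^ α₁ * gx p) +
    (p.1 ^ α₂ * gy p) * (p.1 ^ α₂ * gy p)) muO := i1.add i2
  have hn : ‖w‖ ^ 2 = _ := h.norm_sq
  have hi : ‖iot α₁ α₂ w‖ ^ 2 = _ := ll_norm_sq' h.r0
  rw [qf, hn, hi, eV, aForm, integral_add i12 iV, integral_add i1 i2]
  simp only [sq]
  ring

lemma mm_eq (hα₁ : α₁ ∈ Ioo (0:ℝ) (1/2)) (hα₂ : α₂ ∈ Ioo (0:ℝ) (1/2))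
    (hm : ∀ w w', m w w' =ᵐ[muO] fun p => iot α₁ α₂ w p * iot α₁ α₂ w' p) {V : ℝ × ℝ → ℝ} {v : LL}
    (hv : v =ᵐ[muO] V) (k : ℕ) : minmaxSet α₁ α₂ V k = mm (iot α₁ α₂) m v k := by
  have key : ∀ (w : Fin k → DD α₁ α₂) (u gx gy : Fin k → ℝ × ℝ → ℝ),
      (∀ i, Repr3 α₁ α₂ (w i).1 (u i) (gx i) (gy i)) →
      ((∀ c : Fin k → ℝ, (∀ᵐ p ∂(volume.restrict Omega), ∑ i, c i * u i p = 0) → c = 0) ↔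
        (∀ c : Fin k → ℝ, ∑ i, c i • iot α₁ α₂ (w i) = 0 → c = 0)) ∧
      rayleighSup α₁ α₂ V u gx gy = sSup { s | ∃ c : Fin k → ℝ, ‖iot α₁ α₂ (∑ i, c i • w i)‖ = 1 ∧
        s = qf (iot α₁ α₂) m v (∑ i, c i • w i) } := by
    intro w u gx gy h
    have hs : ∀ c : Fin k → ℝ, Repr3 α₁ α₂ (∑ i, c i • w i : DD α₁ α₂).1 (fun p => ∑ i, c i * u i p)
        (fun p => ∑ i, c i * gx i p) (fun p => ∑ i, c i * gy i p) := by
      intro c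
      have := Repr3.sum c h Finset.univ
      simpa using this
    constructor
    · refine forall_congr' fun c => ?_
      have e1 : ∑ i, c i • iot α₁ α₂ (w i) = iot α₁ α₂ (∑ i, c i • w i) := by simp
      have e2 : iot α₁ α₂ (∑ i, c i • w i) = 0 ↔ ∀ᵐ p ∂(volume.restrict Omega), ∑ i, c i * u i p = 0 := by
        rw [Lp.eq_zero_iff_ae_eq_zero]
        have r := (hs c).r0
        constructor
        · intro h0
          filter_upwards [r, h0] with p a b
          exact a.symm.trans b
        · intro h0
          filter_upwards [r, h0] with p a b
          exact a.trans b
      rw [e1, e2]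
    · rw [rayleighSup]
      congr 1
      ext s
      refine exists_congr fun c => ?_
      rw [lemC hm hv (hs c)]
      have hn : ‖iot α₁ α₂ (∑ i, c i • w i)‖ ^ 2 = _ := ll_norm_sq' (hs c).r0
      rw [← sq_eq_one_iff_of_nonneg' (norm_nonneg (iot α₁ α₂ (∑ i, c i • w i))), hn]
  ext r
  constructor
  · rintro ⟨u, gx, gy, h1, h2, h3⟩
    choose w hw using fun i => lemA hα₁ hα₂ (h1 i).1
    obtain ⟨k1, k2⟩ := key w u gx gy hw
    exact ⟨w, k1.1 h2, h3.trans k2⟩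
  · rintro ⟨w, h2, h3⟩
    obtain ⟨k1, k2⟩ := key w _ _ _ (fun i => repr_self (w i).1)
    refine ⟨_, _, _, fun i => ⟨lemB (w i), ?_⟩, k1.2 h2, h3.trans k2.symm⟩
    have := (Vuu hm hv (repr_self (w i).1)).1
    refine Integrable.congr this (Eventually.of_forall fun p => ?_)
    simp only [sq]
    ring

end GapTransl

/-- Existence of a gap-minimizing potential: for `p > 2`, the
infimum of the fundamental gap `Γ` over `S_p` is attained by some `V* ∈ S_p`. -/
theorem gap_minimizer_exists (α₁ α₂ ppow M : ℝ)
    (hα₁ : α₁ ∈ Ioo (0:ℝ) (1/2)) (hα₂ : α₂ ∈ Ioo (0:ℝ) (1/2))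
    (hp : 2 < ppow) (hM : 0 < M) :
    ∃ Vstar : ℝ × ℝ → ℝ, MemSp ppow M Vstar ∧
      ∀ V : ℝ × ℝ → ℝ, MemSp ppow M V →
        gap α₁ α₂ Vstar ≤ gap α₁ α₂ V := by
  obtain ⟨m, hm⟩ := exists_m hα₁ hα₂
  obtain ⟨v, hv, hmin⟩ := abstract_gap (setup hα₁ hα₂ hp hM hm)
  have hg : ∀ (V : ℝ × ℝ → ℝ) (v : LL), v =ᵐ[muO] V → gap α₁ α₂ V =
      sInf (mm (iot α₁ α₂) m v 2) - sInf (mm (iot α₁ α₂) m v 1) := by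
    intro V v h
    rw [gap, lamk, lamk, mm_eq hα₁ hα₂ hm h, mm_eq hα₁ hα₂ hm h]
  refine ⟨v, ⟨⟨Lp.aestronglyMeasurable v, hv.2.trans_lt ENNReal.ofReal_lt_top⟩,
    (Lp.coeFn_nonneg v).2 hv.1, hv.2⟩, fun V hV => ?_⟩
  have h2 : MemLp V 2 muO := hV.1.mono_exponent (by
    rw [show (2 : ENNReal) = ENNReal.ofReal 2 by simp]
    exact ENNReal.ofReal_le_ofReal hp.le)
  rw [hg v v (ae_eq_refl _), hg V (h2.toLp V) h2.coeFn_toLp]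
  refine hmin _ ⟨?_, ?_⟩
  · rw [← Lp.coeFn_nonneg]
    filter_upwards [h2.coeFn_toLp, hV.2.1] with p a b
    rw [a]; exact b
  · rw [eLpNorm_congr_ae h2.coeFn_toLp]
    exact hV.2.2
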